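/- Let f be a multicritical circle map with irrational rotation number, chosen critical point c_0, which is canonical: each critical point c_k has a neighborhood U_k on which f(x) = f(c_k) + (x−c_k)|x−c_k|^{s_k−1}. There exists a positive integer n_0 = n_0(f) such that for all n ≥ n_0 the following holds: for each non-empty reduced bridge G_i* = ⋃_{k=k_i+2}^{k_{i+1}−2} Δ_k ⊂ I_n(c_0), the Schwarzian derivative of f^{q_{n+1}} is negative at every point of G_i*: Sf^{q_{n+1}}(x) < 0 for all x ∈ G_i*. -/

import Mathlib

open Set Filter MeasureTheory

noncomputable section

/-- The Schwarzian derivative `Sf = (f''/f')' - (1/2) (f''/f')^2`. -/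
def schwarzianDeriv (f : ℝ → ℝ) (x : ℝ) : ℝ :=
  deriv (fun y => deriv (deriv f) y / deriv f y) x
    - (1 / 2) * (deriv (deriv f) x / deriv f x) ^ 2

/-- A multicritical circle map, described through its lift `F : ℝ → ℝ` to the real line.
It is an orientation-preserving `C^3` circle homeomorphism with finitely many critical
points `c 0, …, c (N-1)`, each of non-flat power-law type: near `c i` the derivative is
pinched between two multiples of `|x - c i| ^ (s i - 1)` with `s i > 1`, the Schwarzian
derivative is negative on a punctured neighborhood of each critical point, and
`log (F')` has bounded variation (bounded by `v`) off the critical neighborhoods. -/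
structure MCM where
  /-- the lift of the circle map -/
  F : ℝ → ℝ
  smooth : ContDiff ℝ 3 F
  mono : StrictMono F
  deg1 : ∀ x, F (x + 1) = F x + 1
  /-- number of critical points -/
  N : ℕ
  N_pos : 0 < N
  /-- the critical points (one representative in `[0,1)` for each) -/
  c : Fin N → ℝ
  c_mem : ∀ i, c i ∈ Set.Ico (0 : ℝ) 1
  c_inj : Function.Injective c
  isCrit : ∀ i, deriv F (c i) = 0
  critOnly : ∀ x, deriv F x = 0 → ∃ (i : Fin N) (k : ℤ), x = c i + (k : ℝ)
  /-- neighborhoods of the critical points -/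
  W : Fin N → Set ℝ
  W_open : ∀ i, IsOpen (W i)
  c_mem_W : ∀ i, c i ∈ W i
  /-- the criticalities (power-law exponents) -/
  s : Fin N → ℝ
  s_gt_one : ∀ i, 1 < s i
  al : Fin N → ℝ
  be : Fin N → ℝ
  al_pos : ∀ i, 0 < al i
  al_lt_be : ∀ i, al i < be i
  powerLaw : ∀ i, ∀ x ∈ W i, x ≠ c i →
    al i * |x - c i| ^ (s i - 1) < deriv F x ∧
      deriv F x < be i * |x - c i| ^ (s i - 1)
  negSchwarzian : ∀ i, ∀ x ∈ W i, x ≠ c i → schwarzianDeriv F x < 0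
  /-- bound for the variation of `log DF` off the critical neighborhoods -/
  v : ℝ
  v_pos : 0 < v
  logDF_var : eVariationOn (fun x => Real.log (deriv F x))
      (Set.Icc 0 1 \ ⋃ (i) (k : ℤ), (fun y => y + (k : ℝ)) '' W i) ≤ ENNReal.ofReal v

/-- The circle map with lift `F` has rotation number `ρ`. -/
def HasRotationNumber (F : ℝ → ℝ) (ρ : ℝ) : Prop :=
  Tendsto (fun n : ℕ => F^[n] 0 / n) atTop (nhds ρ)

/-- The Gauss map `x ↦ {1/x}`. -/
def gaussMap (x : ℝ) : ℝ := Int.fract x⁻¹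

/-- Partial quotients `a_n` of the continued fraction expansion of `ρ ∈ (0,1)`. -/
def cfDigit (ρ : ℝ) (n : ℕ) : ℕ := (⌊(gaussMap^[n] ρ)⁻¹⌋).toNat

/-- Return times: the denominators `q_n` of the convergents of `ρ`,
`q_0 = 1`, `q_1 = a_0`, `q_{n+1} = a_n q_n + q_{n-1}`. -/
def qDen (ρ : ℝ) : ℕ → ℕ
  | 0 => 1
  | 1 => cfDigit ρ 0
  | n + 2 => cfDigit ρ (n + 1) * qDen ρ (n + 1) + qDen ρ n

/-- Numerators `p_n` of the convergents of `ρ`: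
`p_0 = 0`, `p_1 = 1`, `p_{n+1} = a_n p_n + p_{n-1}`. -/
def pNum (ρ : ℝ) : ℕ → ℕ
  | 0 => 0
  | 1 => 1
  | n + 2 => cfDigit ρ (n + 1) * pNum ρ (n + 1) + pNum ρ n

/-- The lift of the atom `I_ℓ^j(x) = f^j(I_ℓ(x))`, where `I_ℓ(x)` is the interval with
endpoints `x` and `f^{q_ℓ}(x)`; the lift of `f^{q_ℓ}(x)` adjacent to `x` is
`F^[q_ℓ] x - p_ℓ`. -/
def atomSet (F : ℝ → ℝ) (ρ x : ℝ) (ℓ j : ℕ) : Set ℝ :=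
  Set.uIcc (F^[j] x) (F^[j + qDen ρ ℓ] x - (pNum ρ ℓ : ℝ))

/-- The length of the atom `I_ℓ^j(x)`. -/
def atomLen (F : ℝ → ℝ) (ρ x : ℝ) (ℓ j : ℕ) : ℝ :=
  |F^[j + qDen ρ ℓ] x - (pNum ρ ℓ : ℝ) - F^[j] x|

/-- The two endpoints (as lifts) of the atom `I_ℓ^j(x)`. -/
def atomEnds (F : ℝ → ℝ) (ρ x : ℝ) (ℓ j : ℕ) : Set ℝ :=
  {F^[j] x, F^[j + qDen ρ ℓ] x - (pNum ρ ℓ : ℝ)}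

/-- `(ℓ, j)` indexes an atom of the `n`-th dynamical partition
`P_n(x) = {I_n^i(x) : i < q_{n+1}} ∪ {I_{n+1}^j(x) : j < q_n}`. -/
def IsAtomIdx (ρ : ℝ) (n ℓ j : ℕ) : Prop :=
  (ℓ = n ∧ j < qDen ρ (n + 1)) ∨ (ℓ = n + 1 ∧ j < qDen ρ n)

/-- Two distinct atoms are adjacent when they share an endpoint on the circle,
i.e. when some endpoints of their lifts differ by an integer. -/
def AdjacentAtoms (F : ℝ → ℝ) (ρ x : ℝ) (ℓ₁ j₁ ℓ₂ j₂ : ℕ) : Prop :=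
  (ℓ₁, j₁) ≠ (ℓ₂, j₂) ∧
    ∃ u ∈ atomEnds F ρ x ℓ₁ j₁, ∃ w ∈ atomEnds F ρ x ℓ₂ j₂, ∃ k : ℤ, w = u + (k : ℝ)

/-- `k` is a *critical time* at level `n`: `k < a_{n+1}` and the atom
`Δ_k = f^{q_n + k q_{n+1}}(I_{n+1}(c₀))` contains a critical point of `f^{q_{n+1}}`. -/
def CritTime (f : MCM) (ρ : ℝ) (i₀ : Fin f.N) (n k : ℕ) : Prop :=
  k < cfDigit ρ (n + 1) ∧
    ∃ x ∈ atomSet f.F ρ (f.c i₀) (n + 1) (qDen ρ n + k * qDen ρ (n + 1)),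
      deriv (f.F^[qDen ρ (n + 1)]) x = 0

/-- `(i, j)` bounds a bridge: `i` is a critical time (or the conventional time `k₀ = 0`),
there is no critical time strictly between `i` and `j`, and `j` is either the next
critical time or the final index `a_{n+1}`. The corresponding bridge is
`G = ⋃_{k=i+1}^{j-1} Δ_k`. -/
def IsBridgePair (f : MCM) (ρ : ℝ) (i₀ : Fin f.N) (n i j : ℕ) : Prop :=
  (CritTime f ρ i₀ n i ∨ i = 0) ∧ i < j ∧
    (∀ k, i < k → k < j → ¬CritTime f ρ i₀ n k) ∧
    (CritTime f ρ i₀ n j ∨ j = cfDigit ρ (n + 1))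

/-- The length of the union `⋃_{k=lo}^{hi-1} Δ_k` of consecutive atoms
`Δ_k = f^{q_n + k q_{n+1}}(I_{n+1}(c₀))`. -/
def bridgeLen (f : MCM) (ρ : ℝ) (i₀ : Fin f.N) (n lo hi : ℕ) : ℝ :=
  ∑ k ∈ Finset.Ico lo hi, atomLen f.F ρ (f.c i₀) (n + 1) (qDen ρ n + k * qDen ρ (n + 1))

open scoped Topology

/-!
By the chain rule, `S(f^q)(x) = ∑_{m < q} Sf(f^m x) (Df^m x)²`. Near a canonical critical point `c₀`
the term `m = 0` is at most `-κ / |x - c₀|²`, hence at most `-κ / |I_n(c₀)|²` on `I_n(c₀)`. The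
other terms are bounded above by `B (Df^m x)²`, because `Sf` is bounded above off the critical
points, and bounded distortion of the first `q_{n+1}` iterates on `I_n(c₀)` gives
`Df^m x ≤ C |f^m I_n(c₀)| / |I_n(c₀)|`. As the intervals `f^m I_n(c₀)` have bounded total length and
become uniformly small, these terms add up to `o(1) / |I_n(c₀)|²`, so the first term wins for large
`n`. The distortion estimate follows from the real bounds, which hold because `f` does not increase
cross-ratios much: not near the critical points because `Sf < 0` there, and not away from them
because `log Df` is Lipschitz. A bridge is translated into `I_n(c₀)` by an integer, and contains no
critical points of `f^{q_{n+1}}` by construction.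
-/

/-! ### Continued fractions -/

section ContinuedFraction

/-- The signed error `q_n ρ - p_n` of the `n`-th convergent of `ρ`. -/
def convergentError (ρ : ℝ) (n : ℕ) : ℝ := qDen ρ n * ρ - pNum ρ n

variable {ρ : ℝ}

lemma irrational_iterate_gaussMap (hirr : Irrational ρ) (n : ℕ) :
    Irrational (gaussMap^[n] ρ) := by
  induction n with
  | zero => exact hirr
  | succ n ih =>
    rw [Function.iterate_succ_apply']
    exact ih.inv.sub_intCast _

lemma iterate_gaussMap_mem_Ioo (hirr : Irrational ρ) (hmem : ρ ∈ Ioo (0 : ℝ) 1) (n : ℕ) :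
    gaussMap^[n] ρ ∈ Ioo (0 : ℝ) 1 := by
  have hne := (irrational_iterate_gaussMap hirr n).ne_zero
  cases n with
  | zero => exact hmem
  | succ n =>
    rw [Function.iterate_succ_apply'] at hne ⊢
    exact ⟨(Int.fract_nonneg _).lt_of_ne hne.symm, Int.fract_lt_one _⟩

lemma one_le_floor_inv_iterate_gaussMap (hirr : Irrational ρ) (hmem : ρ ∈ Ioo (0 : ℝ) 1)
    (n : ℕ) : 1 ≤ ⌊(gaussMap^[n] ρ)⁻¹⌋ := by
  obtain ⟨hpos, hlt⟩ := iterate_gaussMap_mem_Ioo hirr hmem n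
  simpa only [Int.le_floor, Int.cast_one] using ((one_lt_inv₀ hpos).2 hlt).le

lemma one_le_cfDigit (hirr : Irrational ρ) (hmem : ρ ∈ Ioo (0 : ℝ) 1) (n : ℕ) :
    1 ≤ cfDigit ρ n := by
  have := one_le_floor_inv_iterate_gaussMap hirr hmem n
  unfold cfDigit
  lia

lemma cfDigit_eq (hirr : Irrational ρ) (hmem : ρ ∈ Ioo (0 : ℝ) 1) (n : ℕ) :
    (cfDigit ρ n : ℝ) = (gaussMap^[n] ρ)⁻¹ - gaussMap^[n + 1] ρ := by
  have hfloor := one_le_floor_inv_iterate_gaussMap hirr hmem n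
  have hcast : (cfDigit ρ n : ℤ) = ⌊(gaussMap^[n] ρ)⁻¹⌋ := Int.toNat_of_nonneg (by lia)
  rw [Function.iterate_succ_apply', gaussMap, Int.self_sub_fract, ← hcast, Int.cast_natCast]

lemma convergentError_add_two (ρ : ℝ) (n : ℕ) :
    convergentError ρ (n + 2) =
      cfDigit ρ (n + 1) * convergentError ρ (n + 1) + convergentError ρ n := by
  simp only [convergentError, qDen, pNum]
  push_cast
  ring

lemma convergentError_succ (hirr : Irrational ρ) (hmem : ρ ∈ Ioo (0 : ℝ) 1) (n : ℕ) :
    convergentError ρ (n + 1) = -gaussMap^[n + 1] ρ * convergentError ρ n := by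
  induction n with
  | zero =>
    have hρ : ρ ≠ 0 := hirr.ne_zero
    simp only [convergentError, qDen, pNum, zero_add, cfDigit_eq hirr hmem 0,
      Function.iterate_zero, id_eq]
    push_cast
    field_simp
    ring
  | succ n ih =>
    have hne := (irrational_iterate_gaussMap hirr (n + 1)).ne_zero
    rw [convergentError_add_two, cfDigit_eq hirr hmem, ih]
    field_simp
    ring

lemma neg_one_pow_mul_convergentError_pos (hirr : Irrational ρ) (hmem : ρ ∈ Ioo (0 : ℝ) 1)
    (n : ℕ) : 0 < (-1) ^ n * convergentError ρ n := by
  induction n with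
  | zero => simpa [convergentError, qDen, pNum] using hmem.1
  | succ n ih =>
    have := mul_pos (iterate_gaussMap_mem_Ioo hirr hmem (n + 1)).1 ih
    rw [convergentError_succ hirr hmem, pow_succ]
    linarith

lemma abs_convergentError (hirr : Irrational ρ) (hmem : ρ ∈ Ioo (0 : ℝ) 1) (n : ℕ) :
    |convergentError ρ n| = (-1) ^ n * convergentError ρ n := by
  rw [← abs_of_pos (neg_one_pow_mul_convergentError_pos hirr hmem n), abs_mul, abs_pow, abs_neg,
    abs_one, one_pow, one_mul]

lemma abs_convergentError_succ (hirr : Irrational ρ) (hmem : ρ ∈ Ioo (0 : ℝ) 1) (n : ℕ) :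
    |convergentError ρ (n + 1)| = gaussMap^[n + 1] ρ * |convergentError ρ n| := by
  rw [convergentError_succ hirr hmem, abs_mul, abs_neg,
    abs_of_pos (iterate_gaussMap_mem_Ioo hirr hmem _).1]

lemma abs_convergentError_pos (hirr : Irrational ρ) (hmem : ρ ∈ Ioo (0 : ℝ) 1) (n : ℕ) :
    0 < |convergentError ρ n| := by
  rw [abs_convergentError hirr hmem]
  exact neg_one_pow_mul_convergentError_pos hirr hmem n

lemma abs_convergentError_succ_lt (hirr : Irrational ρ) (hmem : ρ ∈ Ioo (0 : ℝ) 1) (n : ℕ) :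
    |convergentError ρ (n + 1)| < |convergentError ρ n| := by
  rw [abs_convergentError_succ hirr hmem]
  exact mul_lt_of_lt_one_left (abs_convergentError_pos hirr hmem n)
    (iterate_gaussMap_mem_Ioo hirr hmem _).2

lemma abs_convergentError_lt_one (hirr : Irrational ρ) (hmem : ρ ∈ Ioo (0 : ℝ) 1) (n : ℕ) :
    |convergentError ρ n| < 1 := by
  induction n with
  | zero => simpa [convergentError, qDen, pNum, abs_of_pos hmem.1] using hmem.2
  | succ n ih => exact (abs_convergentError_succ_lt hirr hmem n).trans ih

lemma abs_convergentError_add_two (hirr : Irrational ρ) (hmem : ρ ∈ Ioo (0 : ℝ) 1) (n : ℕ) :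
    |convergentError ρ (n + 2)| =
      |convergentError ρ n| - cfDigit ρ (n + 1) * |convergentError ρ (n + 1)| := by
  rw [abs_convergentError hirr hmem, abs_convergentError hirr hmem, abs_convergentError hirr hmem,
    convergentError_add_two]
  ring

lemma two_mul_abs_convergentError_add_two_le (hirr : Irrational ρ) (hmem : ρ ∈ Ioo (0 : ℝ) 1)
    (n : ℕ) : 2 * |convergentError ρ (n + 2)| ≤ |convergentError ρ n| := by
  have hdigit : (1 : ℝ) ≤ cfDigit ρ (n + 1) := by
    exact_mod_cast one_le_cfDigit hirr hmem (n + 1)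
  have := le_mul_of_one_le_left (abs_nonneg (convergentError ρ (n + 1))) hdigit
  linarith [abs_convergentError_add_two hirr hmem n, abs_convergentError_succ_lt hirr hmem (n + 1)]

lemma convergentError_add_mul_mem_uIcc (hirr : Irrational ρ) (hmem : ρ ∈ Ioo (0 : ℝ) 1)
    {n k : ℕ} (hk : k ≤ cfDigit ρ (n + 1)) :
    convergentError ρ n + k * convergentError ρ (n + 1) ∈ uIcc 0 (convergentError ρ n) := by
  set e := convergentError ρ n
  set e' := convergentError ρ (n + 1)
  have hk' : (k : ℝ) * |e'| ≤ cfDigit ρ (n + 1) * |e'| := by gcongr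
  have htwo := abs_convergentError_add_two hirr hmem n
  have hnonneg : 0 ≤ k * |e'| := by positivity
  have hnonneg' := abs_nonneg (convergentError ρ (n + 2))
  have habs := abs_convergentError hirr hmem n
  have habs' := abs_convergentError hirr hmem (n + 1)
  rcases neg_one_pow_eq_or ℝ n with h | h <;>
    simp only [pow_succ, h, one_mul, mul_one, mul_neg, neg_neg, neg_mul] at habs habs' <;>
    rw [mem_uIcc]
  · left; constructor <;> nlinarith
  · right; constructor <;> nlinarith

lemma one_le_qDen (hirr : Irrational ρ) (hmem : ρ ∈ Ioo (0 : ℝ) 1) : ∀ n, 1 ≤ qDen ρ n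
  | 0 => le_rfl
  | 1 => one_le_cfDigit hirr hmem 0
  | n + 2 => (one_le_qDen hirr hmem n).trans (Nat.le_add_left _ _)

lemma qDen_le_qDen_succ (hirr : Irrational ρ) (hmem : ρ ∈ Ioo (0 : ℝ) 1) :
    ∀ n, qDen ρ n ≤ qDen ρ (n + 1)
  | 0 => one_le_cfDigit hirr hmem 0
  | n + 1 => (Nat.le_mul_of_pos_left _ (one_le_cfDigit hirr hmem (n + 1))).trans
      (Nat.le_add_right _ _)

lemma pNum_mul_qDen_sub (ρ : ℝ) (n : ℕ) :
    (pNum ρ (n + 1) : ℤ) * qDen ρ n - pNum ρ n * qDen ρ (n + 1) = (-1) ^ n := by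
  induction n with
  | zero => simp [qDen, pNum]
  | succ n ih =>
    simp only [pNum, qDen]
    push_cast
    rw [pow_succ, ← ih]
    ring

lemma exists_eq_combination_convergents (ρ : ℝ) (n : ℕ) (k r : ℤ) :
    ∃ α β : ℤ, k = α * qDen ρ n + β * qDen ρ (n + 1) ∧
      r = α * pNum ρ n + β * pNum ρ (n + 1) := by
  have hsq : ((-1 : ℤ) ^ n) * (-1) ^ n = 1 := by rw [← mul_pow]; simp
  refine ⟨(-1) ^ n * (pNum ρ (n + 1) * k - qDen ρ (n + 1) * r),
    (-1) ^ n * (qDen ρ n * r - pNum ρ n * k), ?_, ?_⟩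
  · linear_combination (-k) * hsq - (-1) ^ n * k * pNum_mul_qDen_sub ρ n
  · linear_combination (-r) * hsq - (-1) ^ n * r * pNum_mul_qDen_sub ρ n

/- Writing `(k, r)` in the basis of two consecutive convergents, `0 < k < q_{n+1}` forces the two
coefficients to have opposite signs, and the two errors have opposite signs as well. -/
theorem abs_convergentError_le_of_lt_qDen (hirr : Irrational ρ) (hmem : ρ ∈ Ioo (0 : ℝ) 1)
    {n k : ℕ} (hk : 0 < k) (hkq : k < qDen ρ (n + 1)) (r : ℤ) :
    |convergentError ρ n| ≤ |k * ρ - r| := by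
  obtain ⟨α, β, hk_eq, hr_eq⟩ := exists_eq_combination_convergents ρ n k r
  obtain ⟨hx0, hx1⟩ := iterate_gaussMap_mem_Ioo hirr hmem (n + 1)
  set x := gaussMap^[n + 1] ρ
  have hsplit : k * ρ - r = (α - β * x) * convergentError ρ n := by
    have hk_real : (k : ℝ) = α * qDen ρ n + β * qDen ρ (n + 1) := by exact_mod_cast hk_eq
    have hr_real : (r : ℝ) = α * pNum ρ n + β * pNum ρ (n + 1) := by exact_mod_cast hr_eq
    have hsucc := convergentError_succ hirr hmem n
    simp only [convergentError] at hsucc ⊢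
    rw [hk_real, hr_real]
    linear_combination β * hsucc
  have hq : (1 : ℤ) ≤ qDen ρ n := by exact_mod_cast one_le_qDen hirr hmem n
  have : (1 : ℤ) ≤ qDen ρ (n + 1) := by exact_mod_cast one_le_qDen hirr hmem (n + 1)
  have hopposite : (1 ≤ α ∧ β ≤ 0) ∨ (α ≤ -1 ∧ 0 ≤ β) := by
    rcases lt_trichotomy α 0 with hα | rfl | hα
    · exact Or.inr ⟨by lia, by by_contra! hβ; nlinarith⟩
    · rcases le_or_gt β 0 with hβ | hβ <;> nlinarith
    · exact Or.inl ⟨by lia, by by_contra! hβ; nlinarith⟩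
  rw [hsplit, abs_mul]
  refine le_mul_of_one_le_left (abs_nonneg _) ?_
  rcases hopposite with ⟨hα, hβ⟩ | ⟨hα, hβ⟩ <;> rify at hα hβ <;> rw [le_abs]
  · left; nlinarith
  · right; nlinarith

end ContinuedFraction

/-! ### Cross-ratios -/

section CrossRatio

/-- The cross-ratio of four points `a < b < c < d`, normalised so that it lies in `(0, 1)` and
tends to `1` as the middle gap `c - b` shrinks. -/
def crossRatio (a b c d : ℝ) : ℝ := (b - a) * (d - c) / ((c - a) * (d - b))

variable {a b c d : ℝ}

lemma crossRatio_eq_mul (a b c d : ℝ) :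
    crossRatio a b c d = (b - a) / (c - a) * ((d - c) / (d - b)) :=
  (div_mul_div_comm _ _ _ _).symm

lemma crossRatio_pos (hab : a < b) (hbc : b < c) (hcd : c < d) : 0 < crossRatio a b c d :=
  div_pos (mul_pos (by linarith) (by linarith)) (mul_pos (by linarith) (by linarith))

lemma crossRatio_sub_const (a b c d s : ℝ) :
    crossRatio (a - s) (b - s) (c - s) (d - s) = crossRatio a b c d := by
  simp only [crossRatio, sub_sub_sub_cancel_right]

lemma crossRatio_neg (a b c d : ℝ) :
    crossRatio (-a) (-b) (-c) (-d) = crossRatio d c b a := by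
  unfold crossRatio
  congr 1 <;> ring

lemma one_div_sq_le_crossRatio {m K : ℝ} (hm : 0 < m) (hab : m ≤ b - a) (hcd : m ≤ d - c)
    (hbc : b < c) (hmid : c - b ≤ K * m) : 1 / (1 + K) ^ 2 ≤ crossRatio a b c d := by
  have hK : 0 < K := pos_of_mul_pos_left (by linarith) hm.le
  have hleft : 1 / (1 + K) ≤ (b - a) / (c - a) := by
    rw [div_le_div_iff₀ (by linarith) (by linarith)]
    nlinarith
  have hright : 1 / (1 + K) ≤ (d - c) / (d - b) := by
    rw [div_le_div_iff₀ (by linarith) (by linarith)]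
    nlinarith
  rw [crossRatio_eq_mul, ← one_div_pow, sq]
  exact mul_le_mul hleft hright (by positivity) (div_nonneg (by linarith) (by linarith))

lemma middle_gap_le_of_one_div_le_crossRatio {t : ℝ} (ht : 0 < t) (hab : a < b) (hbc : b < c)
    (hcd : c < d) (h : 1 / t ≤ crossRatio a b c d) :
    c - b ≤ t * (b - a) ∧ c - b ≤ t * (d - c) := by
  rw [crossRatio_eq_mul] at h
  have hleft : (b - a) / (c - a) ≤ 1 := (div_le_one (by linarith)).2 (by linarith)
  have hright : (d - c) / (d - b) ≤ 1 := (div_le_one (by linarith)).2 (by linarith)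
  have hleft' := h.trans (mul_le_of_le_one_right (div_nonneg (by linarith) (by linarith)) hright)
  have hright' := h.trans (mul_le_of_le_one_left (div_nonneg (by linarith) (by linarith)) hleft)
  rw [div_le_div_iff₀ ht (by linarith)] at hleft' hright'
  constructor <;> linarith

lemma le_of_crossRatio_le_of_hasDerivAt {f : ℝ → ℝ} {D B x : ℝ} (hf : HasDerivAt f D x)
    (hxc : x < c) (hcd : c < d) (hfxc : f x < f c) (hfcd : f c < f d)
    (hcr : ∀ t ∈ Ioo x c, crossRatio (f x) (f t) (f c) (f d) ≤ B * crossRatio x t c d) :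
    D * ((f d - f c) / ((f c - f x) * (f d - f x))) ≤ B * ((d - c) / ((c - x) * (d - x))) := by
  have hnhds : 𝓝[>] x ≤ 𝓝 x := nhdsWithin_le_nhds
  have hslope : Tendsto (slope f x) (𝓝[>] x) (𝓝 D) :=
    (hasDerivAt_iff_tendsto_slope.1 hf).mono_left (nhdsWithin_mono x fun _ ht => ht.ne')
  have hf_lim : Tendsto f (𝓝[>] x) (𝓝 (f x)) := hf.continuousAt.tendsto.mono_left hnhds
  have hleft : Tendsto (fun t => slope f x t * ((f d - f c) / ((f c - f x) * (f d - f t))))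
      (𝓝[>] x) (𝓝 (D * ((f d - f c) / ((f c - f x) * (f d - f x))))) :=
    hslope.mul (tendsto_const_nhds.div ((tendsto_const_nhds.sub hf_lim).const_mul _)
      (mul_pos (by linarith) (by linarith)).ne')
  have hright : Tendsto (fun t => B * ((d - c) / ((c - x) * (d - t))))
      (𝓝[>] x) (𝓝 (B * ((d - c) / ((c - x) * (d - x))))) :=
    (tendsto_const_nhds.div ((tendsto_const_nhds.sub (tendsto_id.mono_left hnhds)).const_mul _)
      (mul_pos (by linarith) (by linarith)).ne').const_mul _
  refine le_of_tendsto_of_tendsto hleft hright ?_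
  filter_upwards [Ioo_mem_nhdsGT hxc] with t ht
  have htx : 0 < t - x := sub_pos.2 ht.1
  calc slope f x t * ((f d - f c) / ((f c - f x) * (f d - f t)))
      = crossRatio (f x) (f t) (f c) (f d) / (t - x) := by
        rw [slope_def_field, crossRatio, div_mul_div_comm, div_div]
        ring
    _ ≤ B * crossRatio x t c d / (t - x) := by gcongr; exact hcr t ht
    _ = B * ((d - c) / ((c - x) * (d - t))) := by
        rw [crossRatio, mul_div_assoc, div_div, mul_comm (_ * _) (t - x),
          mul_div_mul_left _ _ htx.ne']

end CrossRatio

/-! ### Lifts with irrational rotation number -/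

section IrrationalLift

/-- `F` is the lift of an orientation-preserving circle homeomorphism with irrational rotation
number `ρ`. -/
structure IsIrrationalLift (F : ℝ → ℝ) (ρ : ℝ) : Prop where
  strictMono : StrictMono F
  continuous : Continuous F
  map_add_one : ∀ x, F (x + 1) = F x + 1
  irrational : Irrational ρ
  hasRotationNumber : HasRotationNumber F ρ

namespace IsIrrationalLift

variable {F : ℝ → ℝ} {ρ : ℝ}

/-- An irrational lift as a bundled `CircleDeg1Lift`, giving access to the theory of the
translation number. -/
def toCircleDeg1Lift (h : IsIrrationalLift F ρ) : CircleDeg1Lift :=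
  ⟨⟨F, h.strictMono.monotone⟩, h.map_add_one⟩

lemma coe_toCircleDeg1Lift_pow (h : IsIrrationalLift F ρ) (m : ℕ) :
    ⇑(h.toCircleDeg1Lift ^ m) = F^[m] :=
  h.toCircleDeg1Lift.coe_pow m

lemma translationNumber_pow (h : IsIrrationalLift F ρ) (m : ℕ) :
    (h.toCircleDeg1Lift ^ m).translationNumber = m * ρ := by
  rw [CircleDeg1Lift.translationNumber_pow]
  congr 1
  exact CircleDeg1Lift.translationNumber_eq_of_tendsto₀ _ h.hasRotationNumber

lemma iterate_add_int (h : IsIrrationalLift F ρ) (m : ℕ) (x : ℝ) (p : ℤ) :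
    F^[m] (x + p) = F^[m] x + p := by
  rw [← h.coe_toCircleDeg1Lift_pow]
  exact CircleDeg1Lift.map_add_int _ x p

lemma iterate_sub_int (h : IsIrrationalLift F ρ) (m : ℕ) (x : ℝ) (p : ℤ) :
    F^[m] (x - p) = F^[m] x - p := by
  rw [← h.coe_toCircleDeg1Lift_pow]
  exact CircleDeg1Lift.map_sub_int _ x p

lemma surjective_iterate (h : IsIrrationalLift F ρ) (m : ℕ) : Function.Surjective F^[m] :=
  (h.toCircleDeg1Lift.continuous_iff_surjective.1 h.continuous).iterate m

theorem iterate_add_int_lt (h : IsIrrationalLift F ρ) {k l : ℕ} {p r : ℤ}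
    (hlt : k * ρ + p < l * ρ + r) (x : ℝ) : F^[k] x + p < F^[l] x + r := by
  rcases le_total k l with hkl | hkl
  · obtain ⟨m, rfl⟩ := Nat.exists_eq_add_of_le hkl
    have := CircleDeg1Lift.lt_map_of_int_lt_translationNumber (h.toCircleDeg1Lift ^ m)
      (n := p - r) (by rw [h.translationNumber_pow]; push_cast at hlt ⊢; linarith) (F^[k] x)
    rw [h.coe_toCircleDeg1Lift_pow, ← Function.iterate_add_apply, add_comm m] at this
    push_cast at this
    linarith
  · obtain ⟨m, rfl⟩ := Nat.exists_eq_add_of_le hkl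
    have := CircleDeg1Lift.map_lt_of_translationNumber_lt_int (h.toCircleDeg1Lift ^ m)
      (n := r - p) (by rw [h.translationNumber_pow]; push_cast at hlt ⊢; linarith) (F^[l] x)
    rw [h.coe_toCircleDeg1Lift_pow, ← Function.iterate_add_apply, add_comm m] at this
    push_cast at this
    linarith

theorem iterate_add_int_le (h : IsIrrationalLift F ρ) {k l : ℕ} {p r : ℤ}
    (hle : k * ρ + p ≤ l * ρ + r) (x : ℝ) : F^[k] x + p ≤ F^[l] x + r := by
  rcases hle.lt_or_eq with hlt | heq
  · exact (h.iterate_add_int_lt hlt x).le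
  · obtain rfl : k = l := by
      by_contra hne
      refine (h.irrational.intCast_mul (m := (k : ℤ) - l) (by lia)).ne_int (r - p) ?_
      push_cast
      linarith
    obtain rfl : p = r := by exact_mod_cast add_left_cancel heq
    rfl

lemma iterate_sub_int_mem_uIcc (h : IsIrrationalLift F ρ) {k l : ℕ} {p r : ℤ}
    (hmem : k * ρ - p ∈ uIcc 0 (l * ρ - r)) (x : ℝ) :
    F^[k] x - p ∈ uIcc x (F^[l] x - r) := by
  have hle : ∀ {k l : ℕ} {p r : ℤ}, k * ρ - p ≤ l * ρ - r → F^[k] x - p ≤ F^[l] x - r :=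
    fun hle => by
      simpa [sub_eq_add_neg] using
        h.iterate_add_int_le (p := -_) (r := -_) (by simpa [sub_eq_add_neg] using hle) x
  rw [mem_uIcc] at hmem ⊢
  refine hmem.imp (fun ⟨h1, h2⟩ => ⟨?_, hle h2⟩) (fun ⟨h1, h2⟩ => ⟨hle h1, ?_⟩)
  · simpa using hle (k := 0) (p := 0) (by simpa using h1)
  · simpa using hle (l := 0) (r := 0) (by simpa using h2)

end IsIrrationalLift

/-- The conjugate of `F` by the orientation-reversing involution `x ↦ -x`. -/
def reflection (F : ℝ → ℝ) (x : ℝ) : ℝ := -F (-x)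

lemma iterate_reflection (F : ℝ → ℝ) (m : ℕ) (x : ℝ) : (reflection F)^[m] x = -F^[m] (-x) := by
  have : Function.Semiconj Neg.neg F (reflection F) := fun y => by simp [reflection]
  simpa using (this.iterate_right m (-x)).symm

lemma deriv_iterate_reflection (F : ℝ → ℝ) (m : ℕ) (x : ℝ) :
    deriv (reflection F)^[m] (-x) = deriv F^[m] x := by
  have : (reflection F)^[m] = fun y => -F^[m] (-y) := funext (iterate_reflection F m)
  rw [this, deriv.fun_neg, deriv_comp_neg, neg_neg, neg_neg]

lemma IsIrrationalLift.reflection {F : ℝ → ℝ} {ρ : ℝ} (h : IsIrrationalLift F ρ) :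
    IsIrrationalLift (reflection F) (-ρ) where
  strictMono _ _ hxy := neg_lt_neg (h.strictMono (neg_lt_neg hxy))
  continuous := (h.continuous.comp continuous_neg).neg
  map_add_one x := by
    have := h.map_add_one (-x - 1)
    rw [sub_add_cancel] at this
    simp only [_root_.reflection, neg_add']
    linarith
  irrational := h.irrational.neg
  hasRotationNumber := by
    simpa [HasRotationNumber, iterate_reflection, neg_div] using h.hasRotationNumber.neg

end IrrationalLift

/-! ### Return maps -/

section Return

/-- The lift of `f^q` that differs from `F^[q]` by the integer translation `p`. -/
def returnMap (F : ℝ → ℝ) (q : ℕ) (p : ℤ) (x : ℝ) : ℝ := F^[q] x - p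

/-- Two consecutive closest returns `q ≤ q'` of the rotation by `ρ`: the first moves points to the
right, the second moves them to the left by less, and no time `0 < k < q'` returns closer than
`q`. -/
structure IsReturnPair (ρ : ℝ) (q q' : ℕ) (p p' : ℤ) : Prop where
  one_le : 1 ≤ q
  le : q ≤ q'
  error_pos : 0 < q * ρ - p
  error_lt_one : q * ρ - p < 1
  error_neg : q' * ρ - p' < 0
  error_add_pos : 0 < (q * ρ - p) + (q' * ρ - p')
  closest : ∀ k : ℕ, 0 < k → k < q' → ∀ r : ℤ, q * ρ - p ≤ |k * ρ - r|

variable {F Φ : ℝ → ℝ} {ρ κ : ℝ} {q q' : ℕ} {p p' : ℤ}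

lemma iterate_returnMap (h : IsIrrationalLift F ρ) (m : ℕ) (x : ℝ) :
    F^[m] (returnMap F q p x) = returnMap F q p (F^[m] x) := by
  rw [returnMap, returnMap, h.iterate_sub_int, ← Function.iterate_add_apply,
    ← Function.iterate_add_apply, add_comm]

lemma returnMap_add_int (h : IsIrrationalLift F ρ) (x : ℝ) (r : ℤ) :
    returnMap F q p (x + r) = returnMap F q p x + r := by
  rw [returnMap, returnMap, h.iterate_add_int, add_sub_right_comm]

lemma strictMono_returnMap (hF : StrictMono F) : StrictMono (returnMap F q p) :=
  fun _ _ hxy => sub_lt_sub_right (hF.iterate q hxy) _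

lemma continuous_returnMap (hF : Continuous F) : Continuous (returnMap F q p) :=
  (hF.iterate q).sub continuous_const

lemma surjective_returnMap (h : IsIrrationalLift F ρ) : Function.Surjective (returnMap F q p) :=
  fun y => (h.surjective_iterate q (y + p)).imp fun _ hx => sub_eq_of_eq_add hx

lemma lt_returnMap (h : IsIrrationalLift F ρ) (hr : IsReturnPair ρ q q' p p') (x : ℝ) :
    x < returnMap F q p x := by
  have := h.iterate_add_int_lt (k := 0) (l := q) (p := 0) (r := -p)
    (by have := hr.error_pos; push_cast; linarith) x
  simpa [returnMap, sub_eq_add_neg] using this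

lemma returnMap_lt_add_one (h : IsIrrationalLift F ρ) (hr : IsReturnPair ρ q q' p p') (x : ℝ) :
    returnMap F q p x < x + 1 := by
  have := h.iterate_add_int_lt (k := q) (l := 0) (p := -p) (r := 1)
    (by have := hr.error_lt_one; push_cast; linarith) x
  simpa [returnMap, sub_eq_add_neg] using this

lemma exists_forall_returnMap_sub_le (h : IsIrrationalLift F ρ) (q : ℕ) (p : ℤ) :
    ∃ z, ∀ x, returnMap F q p z - z ≤ returnMap F q p x - x := by
  have hcont : Continuous fun x => returnMap F q p x - x :=
    (continuous_returnMap h.continuous).sub continuous_id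
  have hper : Function.Periodic (fun x => returnMap F q p x - x) 1 := fun x => by
    have := returnMap_add_int (q := q) (p := p) h x 1
    push_cast at this
    simp only [this, add_sub_add_right_eq_sub]
  obtain ⟨_, ⟨z, rfl⟩, hz⟩ :=
    (hper.compact_of_continuous one_ne_zero hcont).exists_isLeast (range_nonempty _)
  exact ⟨z, fun x => hz (mem_range_self x)⟩

lemma iterate_returnMap_add_le_or (h : IsIrrationalLift F ρ) (hr : IsReturnPair ρ q q' p p')
    {j l : ℕ} (hj : j < q') (hl : l < q') (hne : j ≠ l) (e e' : ℤ) (y : ℝ) :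
    F^[j] (returnMap F q p y) + e ≤ F^[l] y + e' ∨
      F^[l] (returnMap F q p y) + e' ≤ F^[j] y + e := by
  wlog hjl : j < l generalizing j l e e'
  · exact (this hl hj hne.symm e' e (by lia)).symm
  obtain ⟨k, rfl⟩ := Nat.exists_eq_add_of_lt hjl
  simp only [returnMap, h.iterate_sub_int, ← Function.iterate_add_apply]
  rcases le_abs.1 (hr.closest (k + 1) (by lia) (by lia) (e - e')) with hclose | hclose
  · left
    have := h.iterate_add_int_le (k := j + q) (l := j + k + 1) (p := e - p) (r := e')
      (by push_cast at hclose ⊢; linarith) y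
    push_cast at this
    linarith
  · right
    have := h.iterate_add_int_le (k := j + k + 1 + q) (l := j) (p := e' - p) (r := e)
      (by push_cast at hclose ⊢; linarith) y
    push_cast at this
    linarith

lemma sum_sub_le_of_disjoint_intervals {ι : Type*} (s : Finset ι) {a b : ι → ℝ}
    (hΦ : Monotone Φ) {A B : ℝ} (hAB : A ≤ B) (ha : ∀ j ∈ s, A ≤ a j) (hab : ∀ j ∈ s, a j < b j)
    (hb : ∀ j ∈ s, b j ≤ B)
    (hdisj : (s : Set ι).Pairwise fun j l => b j ≤ a l ∨ b l ≤ a j) :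
    ∑ j ∈ s, (Φ (b j) - Φ (a j)) ≤ Φ B - Φ A := by
  classical
  induction s using Finset.induction_on_max_value a generalizing B with
  | empty => simpa using hΦ hAB
  | insert i s his hmax ih =>
    simp only [Finset.forall_mem_insert, Finset.coe_insert] at ha hab hb hdisj
    have hbi : ∀ j ∈ s, b j ≤ a i := fun j hj => by
      have hne : j ≠ i := fun hji => his (hji ▸ hj)
      rcases hdisj (mem_insert_of_mem i hj) (mem_insert i _) hne with hji | hij
      · exact hji
      · linarith [hmax j hj, hab.1]
    rw [Finset.sum_insert his]
    have := ih ha.1 ha.2 hab.2 hbi (hdisj.mono (subset_insert _ _))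
    linarith [hΦ hb.1]

lemma map_add_int_of_map_add_one (hΦ : ∀ x, Φ (x + 1) = Φ x + κ) (x : ℝ) (r : ℤ) :
    Φ (x + r) = Φ x + r * κ := by
  simpa using AddConstMapClass.map_add_int' (⟨Φ, hΦ⟩ : AddConstMap ℝ ℝ 1 κ) x r

/- Translated into `[0, 2]`, the intervals `F^j [y, g y]`, `j < q'`, are pairwise disjoint. -/
theorem sum_iterate_returnMap_sub_le (h : IsIrrationalLift F ρ) (hr : IsReturnPair ρ q q' p p')
    (hmono : Monotone Φ) (hΦ : ∀ x, Φ (x + 1) = Φ x + κ) (y : ℝ) :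
    ∑ j ∈ Finset.range q', (Φ (F^[j] (returnMap F q p y)) - Φ (F^[j] y)) ≤ 2 * κ := by
  set e : ℕ → ℤ := fun j => -⌊F^[j] y⌋
  have hnonneg : ∀ j, 0 ≤ F^[j] y + e j := fun j => by
    simpa [e] using Int.floor_le (F^[j] y)
  have hlt : ∀ j, F^[j] y + e j < F^[j] (returnMap F q p y) + e j := fun j =>
    add_lt_add_left (h.strictMono.iterate j (lt_returnMap h hr y)) _
  have hle_two : ∀ j, F^[j] (returnMap F q p y) + e j ≤ 2 := fun j => by
    have h1 := Int.lt_floor_add_one (F^[j] y)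
    have h2 := returnMap_lt_add_one h hr (F^[j] y)
    rw [iterate_returnMap h]
    push_cast [e]
    linarith
  have htwo : Φ 2 = Φ 0 + 2 * κ := by
    simpa using map_add_int_of_map_add_one hΦ 0 2
  calc ∑ j ∈ Finset.range q', (Φ (F^[j] (returnMap F q p y)) - Φ (F^[j] y))
      = ∑ j ∈ Finset.range q',
          (Φ (F^[j] (returnMap F q p y) + e j) - Φ (F^[j] y + e j)) := by
        simp only [map_add_int_of_map_add_one hΦ, add_sub_add_right_eq_sub]
    _ ≤ Φ 2 - Φ 0 := sum_sub_le_of_disjoint_intervals _ hmono zero_le_two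
        (fun j _ => hnonneg j) (fun j _ => hlt j) (fun j _ => hle_two j)
        (fun j hj l hl hne => iterate_returnMap_add_le_or h hr (by simpa using hj)
          (by simpa using hl) hne _ _ y)
    _ = 2 * κ := by rw [htwo, add_sub_cancel_left]

lemma sum_iterate_returnMap_sub_le_of_le_add (h : IsIrrationalLift F ρ)
    (hr : IsReturnPair ρ q q' p p') (hmono : Monotone Φ) (hΦ : ∀ x, Φ (x + 1) = Φ x + κ)
    {m : ℕ} (hm : m ≤ q' + q') (y : ℝ) :
    ∑ j ∈ Finset.range m, (Φ (F^[j] (returnMap F q p y)) - Φ (F^[j] y)) ≤ 4 * κ := by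
  have hnonneg : ∀ j, 0 ≤ Φ (F^[j] (returnMap F q p y)) - Φ (F^[j] y) := fun j =>
    sub_nonneg.2 (hmono ((h.strictMono.iterate j).monotone (lt_returnMap h hr y).le))
  have hsplit := Finset.sum_range_add
    (fun j => Φ (F^[j] (returnMap F q p y)) - Φ (F^[j] y)) q' q'
  have hshift : ∀ j z, F^[q' + j] z = F^[j] (F^[q'] z) := fun j z => by
    rw [add_comm, Function.iterate_add_apply]
  simp only [hshift, iterate_returnMap h q'] at hsplit
  linarith [Finset.sum_le_sum_of_subset_of_nonneg (Finset.range_subset_range.2 hm)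
      fun j _ _ => hnonneg j,
    sum_iterate_returnMap_sub_le h hr hmono hΦ y,
    sum_iterate_returnMap_sub_le h hr hmono hΦ (F^[q'] y)]

/- Take the largest translate of `w, …, F^{q + q'} w` not exceeding `x`; applying one of the two
return maps to it stays in the list and moves to the right of `x`. -/
lemma exists_iterate_le_lt_iterate_add (h : IsIrrationalLift F ρ)
    (hr : IsReturnPair ρ q q' p p') (w x : ℝ) :
    ∃ l ≤ q + q', ∃ r : ℤ, F^[l] w + r ≤ x ∧ x < F^[l + q] w + (r - p : ℤ) := by
  have hq := hr.one_le
  have hqq' := hr.le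
  obtain ⟨l, hl, hmax⟩ := Finset.exists_max_image (Finset.Ioc 0 (q + q'))
    (fun l => F^[l] w + ⌊x - F^[l] w⌋) ⟨1, by simp only [Finset.mem_Ioc]; lia⟩
  rw [Finset.mem_Ioc] at hl
  set r := ⌊x - F^[l] w⌋
  have hle : F^[l] w + r ≤ x := by linarith [Int.floor_le (x - F^[l] w)]
  have hlt_of_lt : ∀ (k : ℕ) (s : ℤ), 0 < k → k ≤ q + q' →
      F^[l] w + r < F^[k] w + s → x < F^[k] w + s := by
    intro k s hk hk' hlt
    by_contra! hcon
    have hs : s ≤ ⌊x - F^[k] w⌋ := Int.le_floor.2 (by linarith)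
    have := hmax k (Finset.mem_Ioc.2 ⟨hk, hk'⟩)
    rify at hs
    linarith
  refine ⟨l, hl.2, r, hle, ?_⟩
  have hright : F^[l] w + r < F^[l + q] w + (r - p : ℤ) :=
    h.iterate_add_int_lt (by have := hr.error_pos; push_cast; linarith) w
  by_cases hlq : l ≤ q'
  · exact hlt_of_lt _ _ (by lia) (by lia) hright
  · obtain ⟨k, rfl⟩ : ∃ k, l = k + q' := ⟨l - q', by lia⟩
    have hback : F^[k + q'] w + r < F^[k] w + (r + p' : ℤ) :=
      h.iterate_add_int_lt (by have := hr.error_neg; push_cast; linarith) w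
    have hforth : F^[k] w + (r + p' : ℤ) < F^[k + q' + q] w + (r - p : ℤ) :=
      h.iterate_add_int_lt (by have := hr.error_add_pos; push_cast; linarith) w
    exact (hlt_of_lt _ _ (by lia) (by lia) hback).trans hforth

lemma exists_iterate_mem_Ico (h : IsIrrationalLift F ρ) (hr : IsReturnPair ρ q q' p p')
    (w x : ℝ) :
    ∃ j ≤ q' + q', ∃ r : ℤ, w + r ≤ F^[j] x ∧ F^[j] x < returnMap F q p w + r := by
  obtain ⟨w₀, rfl⟩ := h.surjective_iterate (q + q') w
  obtain ⟨l, hl, r, hle, hlt⟩ := exists_iterate_le_lt_iterate_add h hr w₀ x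
  have hadd : q + q' - l + l = q + q' := Nat.sub_add_cancel hl
  have hqq' := hr.le
  refine ⟨q + q' - l, by lia, r, ?_, ?_⟩
  · have := (h.strictMono.iterate (q + q' - l)).monotone hle
    rwa [h.iterate_add_int, ← Function.iterate_add_apply, hadd] at this
  · have := h.strictMono.iterate (q + q' - l) hlt
    rw [h.iterate_add_int, ← Function.iterate_add_apply, ← add_assoc, hadd, add_comm _ q,
      Function.iterate_add_apply] at this
    push_cast at this
    rw [returnMap]
    linarith

end Return

/-! ### A priori bounds -/

section RealBounds

/-- `F` distorts the cross-ratio of any four points of `[a, d]` by a factor at most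
`exp (Φ d - Φ a)`, where the control function `Φ` increases by `κ` over each turn of the circle. -/
structure HasCrossRatioControl (F Φ : ℝ → ℝ) (κ : ℝ) : Prop where
  monotone : Monotone Φ
  map_add_one : ∀ x, Φ (x + 1) = Φ x + κ
  crossRatio_le : ∀ ⦃a b c d⦄, a < b → b < c → c < d →
    crossRatio (F a) (F b) (F c) (F d) ≤ Real.exp (Φ d - Φ a) * crossRatio a b c d

/-- The constant comparing consecutive gaps `[x, g x]`, `[g x, g (g x)]` of a return map of a lift
with cross-ratio control of total mass `κ`. -/
def gapConstant (κ : ℝ) : ℝ := (4 * Real.exp (12 * κ) + 2) ^ 2 * Real.exp (12 * κ)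

lemma gapConstant_pos (κ : ℝ) : 0 < gapConstant κ := by
  unfold gapConstant
  positivity

variable {F Φ : ℝ → ℝ} {ρ κ : ℝ} {q q' : ℕ} {p p' : ℤ}

lemma HasCrossRatioControl.crossRatio_iterate_le (hc : HasCrossRatioControl F Φ κ)
    (hF : StrictMono F) (m : ℕ) {a b c d : ℝ} (hab : a < b) (hbc : b < c) (hcd : c < d) :
    crossRatio (F^[m] a) (F^[m] b) (F^[m] c) (F^[m] d) ≤
      Real.exp (∑ j ∈ Finset.range m, (Φ (F^[j] d) - Φ (F^[j] a))) * crossRatio a b c d := by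
  induction m with
  | zero => simp
  | succ m ih =>
    have hm := hF.iterate m
    simp only [Function.iterate_succ_apply']
    refine (hc.crossRatio_le (hm hab) (hm hbc) (hm hcd)).trans ?_
    rw [Finset.sum_range_succ, add_comm, Real.exp_add, mul_assoc]
    gcongr

lemma crossRatio_iterate_le_of_returnMap (h : IsIrrationalLift F ρ)
    (hc : HasCrossRatioControl F Φ κ) (hr : IsReturnPair ρ q q' p p') {m : ℕ}
    (hm : m ≤ q' + q') {y a b c d : ℝ} (hya : y ≤ a) (hab : a < b) (hbc : b < c) (hcd : c < d)
    (hd : d ≤ returnMap F q p (returnMap F q p (returnMap F q p y))) :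
    crossRatio (F^[m] a) (F^[m] b) (F^[m] c) (F^[m] d) ≤
      Real.exp (12 * κ) * crossRatio a b c d := by
  refine (hc.crossRatio_iterate_le h.strictMono m hab hbc hcd).trans ?_
  have hpos := (crossRatio_pos hab hbc hcd).le
  gcongr
  set g := returnMap F q p
  have hsum : ∀ z, ∑ j ∈ Finset.range m, (Φ (F^[j] (g z)) - Φ (F^[j] z)) ≤ 4 * κ :=
    sum_iterate_returnMap_sub_le_of_le_add h hr hc.monotone hc.map_add_one hm
  calc ∑ j ∈ Finset.range m, (Φ (F^[j] d) - Φ (F^[j] a))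
      ≤ ∑ j ∈ Finset.range m, ((Φ (F^[j] (g y)) - Φ (F^[j] y)) +
          (Φ (F^[j] (g (g y))) - Φ (F^[j] (g y))) +
          (Φ (F^[j] (g (g (g y)))) - Φ (F^[j] (g (g y))))) := by
        refine Finset.sum_le_sum fun j _ => ?_
        have hj := (h.strictMono.iterate j).monotone
        linarith [hc.monotone (hj hya), hc.monotone (hj hd)]
    _ ≤ 12 * κ := by
        rw [Finset.sum_add_distrib, Finset.sum_add_distrib]
        linarith [hsum y, hsum (g y), hsum (g (g y))]

/- At a shortest gap `[z, g z]` the cross-ratio of four consecutive points of the orbit of `g` is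
bounded below; pulling back by `g` bounds the preceding gap. -/
lemma exists_le_gap_and_gap_le (h : IsIrrationalLift F ρ) (hc : HasCrossRatioControl F Φ κ)
    (hr : IsReturnPair ρ q q' p p') :
    ∃ m₀ > 0, (∀ x, m₀ ≤ returnMap F q p x - x) ∧
      ∃ v, returnMap F q p (returnMap F q p v) - v ≤ (4 * Real.exp (12 * κ) + 1) * m₀ := by
  set g := returnMap F q p
  have hlt : ∀ x, x < g x := lt_returnMap h hr
  obtain ⟨z, hz⟩ : ∃ z, ∀ x, g z - z ≤ g x - x := exists_forall_returnMap_sub_le h q p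
  obtain ⟨v, rfl⟩ : ∃ v, g v = z := surjective_returnMap h z
  obtain ⟨u, rfl⟩ : ∃ u, g u = v := surjective_returnMap h v
  have hm₀ : 0 < g (g (g u)) - g (g u) := sub_pos.2 (hlt _)
  have hqq' := hr.le
  refine ⟨g (g (g u)) - g (g u), hm₀, hz, g u, ?_⟩
  have himage : 1 / (1 + 1) ^ 2 ≤
      crossRatio (F^[q] u) (F^[q] (g u)) (F^[q] (g (g u))) (F^[q] (g (g (g u)))) := by
    rw [← crossRatio_sub_const _ _ _ _ (p : ℝ)]
    exact one_div_sq_le_crossRatio hm₀ (hz _) (hz _) (hlt (g (g u))) (one_mul _).ge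
  have hcr := crossRatio_iterate_le_of_returnMap h hc hr (m := q) (by lia) le_rfl (hlt u)
    (hlt (g u)) (hlt (g (g u))) le_rfl
  have hlower : 1 / (4 * Real.exp (12 * κ)) ≤ crossRatio u (g u) (g (g u)) (g (g (g u))) := by
    rw [div_le_iff₀ (by positivity)]
    linarith
  have := (middle_gap_le_of_one_div_le_crossRatio (by positivity) (hlt _) (hlt _) (hlt _)
    hlower).2
  linarith

/- Some iterate `j ≤ 2 q'` carries the gap around `g x` into the neighbourhood of a shortest gap. -/
lemma one_div_gapConstant_le_crossRatio (h : IsIrrationalLift F ρ)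
    (hc : HasCrossRatioControl F Φ κ) (hr : IsReturnPair ρ q q' p p') (x : ℝ) :
    1 / gapConstant κ ≤ crossRatio x (returnMap F q p x) (returnMap F q p (returnMap F q p x))
      (returnMap F q p (returnMap F q p (returnMap F q p x))) := by
  obtain ⟨m₀, hm₀, hmin, v, hv⟩ := exists_le_gap_and_gap_le h hc hr
  have hlt := lt_returnMap h hr
  obtain ⟨j, hj, r, hvj, hjv⟩ := exists_iterate_mem_Ico h hr v (returnMap F q p x)
  have hjv' := (strictMono_returnMap (q := q) (p := p) h.strictMono).monotone hjv.le
  rw [returnMap_add_int h, ← iterate_returnMap h] at hjv'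
  have hlower := one_div_sq_le_crossRatio (a := F^[j] x)
    (d := F^[j] (returnMap F q p (returnMap F q p (returnMap F q p x)))) hm₀
    (by rw [iterate_returnMap h]; exact hmin _)
    (by rw [iterate_returnMap h j (returnMap F q p (returnMap F q p x))]; exact hmin _)
    (h.strictMono.iterate j (hlt (returnMap F q p x)))
    (show _ ≤ (4 * Real.exp (12 * κ) + 1) * m₀ by linarith)
  have hcr := crossRatio_iterate_le_of_returnMap h hc hr hj le_rfl (hlt x) (hlt _) (hlt _) le_rfl
  rw [gapConstant, ← div_div, div_le_iff₀ (Real.exp_pos _), mul_comm (crossRatio _ _ _ _)]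
  refine le_trans (le_of_eq ?_) (hlower.trans hcr)
  ring

theorem returnMap_gap_comparable (h : IsIrrationalLift F ρ) (hc : HasCrossRatioControl F Φ κ)
    (hr : IsReturnPair ρ q q' p p') (x : ℝ) :
    returnMap F q p x - x ≤
        gapConstant κ * (returnMap F q p (returnMap F q p x) - returnMap F q p x) ∧
      returnMap F q p (returnMap F q p x) - returnMap F q p x ≤
        gapConstant κ * (returnMap F q p x - x) := by
  have hlt := lt_returnMap h hr
  have hmiddle := fun x => middle_gap_le_of_one_div_le_crossRatio (gapConstant_pos κ) (hlt x)
    (hlt _) (hlt _) (one_div_gapConstant_le_crossRatio h hc hr x)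
  obtain ⟨w, rfl⟩ := surjective_returnMap (q := q) (p := p) h x
  exact ⟨(hmiddle w).2, (hmiddle (returnMap F q p w)).1⟩

lemma mul_le_of_gaps_comparable {B C D J₀ J₁ J₂ M₀ M₁ M₂ u w : ℝ} (hB : 0 < B) (hC : 0 < C)
    (hJ₀ : 0 < J₀) (hJ₁ : 0 < J₁) (hJ₂ : 0 < J₂) (hM₁ : 0 < M₁) (hM₂ : 0 < M₂)
    (hJ : J₀ ≤ C * J₁) (hM₁₀ : M₁ ≤ C * M₀) (hM₀₁ : M₀ ≤ C * M₁) (hM₁₂ : M₁ ≤ C * M₂)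
    (hu : J₁ ≤ u) (hw : M₁ ≤ w) (hw' : w ≤ M₀ + M₁)
    (h : D * (M₂ / (w * (w + M₂))) ≤ B * (J₂ / (u * (u + J₂)))) :
    D * J₀ ≤ B * C * (1 + C) * (1 + C + C ^ 2) * M₀ := by
  have hM₀ : 0 < M₀ := pos_of_mul_pos_right (hM₁.trans_le hM₁₀) hC.le
  have hu₀ : 0 < u := hJ₁.trans_le hu
  have hw₀ : 0 < w := hM₁.trans_le hw
  have hsource : J₂ / (u * (u + J₂)) ≤ C / J₀ := by
    rw [div_le_div_iff₀ (by positivity) hJ₀]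
    calc J₂ * J₀ ≤ (u + J₂) * (C * u) := by
          gcongr
          · linarith
          · exact hJ.trans (by gcongr)
      _ = C * (u * (u + J₂)) := by ring
  have htarget : w * (w + M₂) ≤ (1 + C) * (1 + C + C ^ 2) * M₀ * M₂ := by
    have h1 : w ≤ (1 + C) * M₀ := by linarith
    have h2 : w + M₂ ≤ (1 + C + C ^ 2) * M₂ := by nlinarith
    calc w * (w + M₂) ≤ (1 + C) * M₀ * ((1 + C + C ^ 2) * M₂) := by gcongr
      _ = (1 + C) * (1 + C + C ^ 2) * M₀ * M₂ := by ring
  have hD : D * (M₂ / (w * (w + M₂))) * J₀ ≤ B * C := by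
    rw [← le_div_iff₀ hJ₀, mul_div_assoc]
    exact h.trans (by gcongr)
  calc D * J₀ = D * (M₂ / (w * (w + M₂))) * J₀ * (w * (w + M₂) / M₂) := by field_simp
    _ ≤ B * C * ((1 + C) * (1 + C + C ^ 2) * M₀ * M₂ / M₂) := by gcongr
    _ = B * C * (1 + C) * (1 + C + C ^ 2) * M₀ := by field_simp

/- The cross-ratio inequality on `x < t < g² y < g³ y`, differentiated at `t = x`. -/
theorem deriv_iterate_mul_gap_le (h : IsIrrationalLift F ρ) (hF : Differentiable ℝ F)
    (hc : HasCrossRatioControl F Φ κ) (hr : IsReturnPair ρ q q' p p') {m : ℕ} (hm : m ≤ q')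
    {x y : ℝ} (hx : x ∈ Icc y (returnMap F q p y)) :
    deriv F^[m] x * (returnMap F q p y - y) ≤
      Real.exp (12 * κ) * gapConstant κ * (1 + gapConstant κ) *
        (1 + gapConstant κ + gapConstant κ ^ 2) * (F^[m] (returnMap F q p y) - F^[m] y) := by
  set g := returnMap F q p with hg
  have hlt : ∀ z, z < g z := lt_returnMap h hr
  have hcomp := fun z => returnMap_gap_comparable h hc hr z
  rw [← hg] at hcomp
  have hmono := h.strictMono.iterate m
  have hcomm : ∀ z, F^[m] (g z) = g (F^[m] z) := iterate_returnMap h m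
  have hxc : x < g (g y) := hx.2.trans_lt (hlt _)
  have hderiv := le_of_crossRatio_le_of_hasDerivAt ((hF.iterate m) x).hasDerivAt hxc
    (hlt (g (g y))) (hmono hxc) (hmono (hlt (g (g y)))) fun t ht =>
      crossRatio_iterate_le_of_returnMap h hc hr (by lia) hx.1 ht.1 ht.2 (hlt _) le_rfl
  have hcompₘ := hcomp (F^[m] y)
  have hcompₘ' := hcomp (g (F^[m] y))
  have hltₘ := hlt (g (F^[m] y))
  have hltₘ' := hlt (g (g (F^[m] y)))
  simp only [← hcomm] at hcompₘ hcompₘ' hltₘ hltₘ'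
  have hFx := hmono.monotone hx.1
  have hFx' := hmono.monotone hx.2
  refine mul_le_of_gaps_comparable (J₁ := g (g y) - g y) (J₂ := g (g (g y)) - g (g y))
    (u := g (g y) - x) (w := F^[m] (g (g y)) - F^[m] x) (Real.exp_pos _) (gapConstant_pos κ)
    (sub_pos.2 (hlt y)) (sub_pos.2 (hlt _)) (sub_pos.2 (hlt _))
    (sub_pos.2 hltₘ) (sub_pos.2 hltₘ') (hcomp y).1 hcompₘ.2 hcompₘ.1 hcompₘ'.1
    (by linarith [hx.2]) (by linarith) (by linarith) ?_
  convert hderiv using 4 <;> ring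

/-- The a priori bounds for the return time `q`, with the same constant `C` for consecutive gaps
and for derivatives; `q'` is the next return time. They are stated with absolute values so as to
cover both directions of return. -/
structure HasGapBounds (F : ℝ → ℝ) (q q' : ℕ) (p : ℤ) (C : ℝ) : Prop where
  gap_le : ∀ x, |returnMap F q p x - x| ≤
    C * |returnMap F q p (returnMap F q p x) - returnMap F q p x|
  deriv_mul_gap_le : ∀ m ≤ q', ∀ y, ∀ x ∈ uIcc y (returnMap F q p y),
    deriv F^[m] x * |returnMap F q p y - y| ≤ C * |F^[m] (returnMap F q p y) - F^[m] y|
  sum_gap_le : ∀ y, ∑ m ∈ Finset.range q', |F^[m] (returnMap F q p y) - F^[m] y| ≤ 2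

/-- The constant in the a priori bounds of a lift with cross-ratio control of total mass `κ`. -/
def gapBoundsConstant (κ : ℝ) : ℝ :=
  gapConstant κ + Real.exp (12 * κ) * gapConstant κ * (1 + gapConstant κ) *
    (1 + gapConstant κ + gapConstant κ ^ 2)

lemma gapBoundsConstant_pos (κ : ℝ) : 0 < gapBoundsConstant κ := by
  have := gapConstant_pos κ
  unfold gapBoundsConstant
  positivity

theorem IsReturnPair.hasGapBounds (hr : IsReturnPair ρ q q' p p') (h : IsIrrationalLift F ρ)
    (hF : Differentiable ℝ F) (hc : HasCrossRatioControl F Φ κ) :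
    HasGapBounds F q q' p (gapBoundsConstant κ) := by
  have hC := gapConstant_pos κ
  have hlt := lt_returnMap h hr
  have habs : ∀ m y, |F^[m] (returnMap F q p y) - F^[m] y| =
      F^[m] (returnMap F q p y) - F^[m] y := fun m y =>
    abs_of_pos (sub_pos.2 (h.strictMono.iterate m (hlt y)))
  refine ⟨fun x => ?_, fun m hm y x hx => ?_, fun y => ?_⟩
  · have hnonneg := (sub_pos.2 (hlt (returnMap F q p x))).le
    rw [abs_of_pos (sub_pos.2 (hlt x)), abs_of_nonneg hnonneg]
    refine (returnMap_gap_comparable h hc hr x).1.trans ?_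
    gcongr
    exact le_add_of_nonneg_right (by positivity)
  · rw [uIcc_of_le (hlt y).le] at hx
    rw [habs, abs_of_pos (sub_pos.2 (hlt y))]
    refine (deriv_iterate_mul_gap_le h hF hc hr hm hx).trans ?_
    have hnonneg := (sub_pos.2 (h.strictMono.iterate m (hlt y))).le
    gcongr
    exact le_add_of_nonneg_left hC.le
  · simpa only [habs, mul_one, id_eq] using
      sum_iterate_returnMap_sub_le h hr monotone_id (fun _ => rfl) y

lemma HasCrossRatioControl.reflection (hc : HasCrossRatioControl F Φ κ) :
    HasCrossRatioControl (reflection F) (fun x => -Φ (-x)) κ where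
  monotone _ _ hxy := neg_le_neg (hc.monotone (neg_le_neg hxy))
  map_add_one x := by
    have := hc.map_add_one (-x - 1)
    rw [sub_add_cancel] at this
    rw [neg_add']
    linarith
  crossRatio_le a b c d hab hbc hcd := by
    have := hc.crossRatio_le (neg_lt_neg hcd) (neg_lt_neg hbc) (neg_lt_neg hab)
    simp only [_root_.reflection, crossRatio_neg, neg_sub_neg] at this ⊢
    exact this

lemma neg_returnMap_reflection (F : ℝ → ℝ) (q : ℕ) (p : ℤ) (x : ℝ) :
    returnMap (reflection F) q (-p) (-x) = -returnMap F q p x := by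
  rw [returnMap, returnMap, iterate_reflection, neg_neg]
  push_cast
  ring

lemma HasGapBounds.of_reflection {C : ℝ} (h : HasGapBounds (reflection F) q q' (-p) C) :
    HasGapBounds F q q' p C := by
  obtain ⟨hgap, hderiv, hsum⟩ := h
  refine ⟨fun x => ?_, fun m hm y x hx => ?_, fun y => ?_⟩
  · simpa only [neg_returnMap_reflection, neg_sub_neg, abs_sub_comm] using hgap (-x)
  · have hx' : -x ∈ uIcc (-y) (-returnMap F q p y) := by
      rw [← neg_uIcc]
      exact neg_mem_neg.2 hx
    simpa only [neg_returnMap_reflection, deriv_iterate_reflection, iterate_reflection, neg_neg,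
      neg_sub_neg, abs_sub_comm] using hderiv m hm (-y) (-x) (by rwa [neg_returnMap_reflection])
  · simpa only [neg_returnMap_reflection, iterate_reflection, neg_neg, neg_sub_neg, abs_sub_comm]
      using hsum (-y)

end RealBounds

/-! ### Geometry of the dynamical partitions -/

section DynamicalPartition

variable {F Φ : ℝ → ℝ} {ρ κ C : ℝ}

/- The factor `(-1) ^ n` is the direction in which the `n`-th convergent returns. -/
lemma isReturnPair_convergents (hirr : Irrational ρ) (hmem : ρ ∈ Ioo (0 : ℝ) 1) (n : ℕ) :
    IsReturnPair ((-1) ^ n * ρ) (qDen ρ n) (qDen ρ (n + 1)) ((-1) ^ n * pNum ρ n)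
      ((-1) ^ n * pNum ρ (n + 1)) := by
  have herror : ∀ (k : ℕ) (r : ℤ),
      k * ((-1) ^ n * ρ) - ((-1) ^ n * r : ℤ) = (-1) ^ n * (k * ρ - r) := fun k r => by
    push_cast
    ring
  have habs := abs_convergentError hirr hmem n
  have habs' := abs_convergentError hirr hmem (n + 1)
  have hpos := abs_convergentError_pos hirr hmem n
  have hpos' := abs_convergentError_pos hirr hmem (n + 1)
  have hlt := abs_convergentError_succ_lt hirr hmem n
  have hlt_one := abs_convergentError_lt_one hirr hmem n
  rw [pow_succ] at habs'
  have hq := herror (qDen ρ n) (pNum ρ n)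
  have hq' := herror (qDen ρ (n + 1)) (pNum ρ (n + 1))
  rw [Int.cast_natCast, ← convergentError] at hq hq'
  refine ⟨one_le_qDen hirr hmem n, qDen_le_qDen_succ hirr hmem n, by linarith, by linarith,
    by linarith, by linarith, fun k hk hkq r => ?_⟩
  have hr : r = (-1) ^ n * ((-1) ^ n * r) := by rw [← mul_assoc, ← mul_pow]; simp
  rw [hq, ← habs, hr, herror, abs_mul, abs_pow, abs_neg, abs_one, one_pow, one_mul]
  exact abs_convergentError_le_of_lt_qDen hirr hmem hk hkq _

theorem hasGapBounds_convergents (h : IsIrrationalLift F ρ) (hmem : ρ ∈ Ioo (0 : ℝ) 1)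
    (hF : Differentiable ℝ F) (hc : HasCrossRatioControl F Φ κ) (n : ℕ) :
    HasGapBounds F (qDen ρ n) (qDen ρ (n + 1)) (pNum ρ n) (gapBoundsConstant κ) := by
  have hr := isReturnPair_convergents h.irrational hmem n
  rcases n.even_or_odd with hn | hn
  · simp only [hn.neg_one_pow, one_mul] at hr
    exact hr.hasGapBounds h hF hc
  · simp only [hn.neg_one_pow, neg_mul, one_mul] at hr
    have hF' : Differentiable ℝ (reflection F) := (hF.comp differentiable_neg).neg
    exact (hr.hasGapBounds h.reflection hF' hc.reflection).of_reflection

lemma two_mul_convergentError_add_two_mem_uIcc (hirr : Irrational ρ) (hmem : ρ ∈ Ioo (0 : ℝ) 1)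
    (n : ℕ) : 2 * convergentError ρ (n + 2) ∈ uIcc 0 (convergentError ρ n) := by
  have habs := abs_convergentError hirr hmem n
  have habs' := abs_convergentError hirr hmem (n + 2)
  have hnonneg := abs_nonneg (convergentError ρ (n + 2))
  have htwo := two_mul_abs_convergentError_add_two_le hirr hmem n
  rw [pow_add, neg_one_sq, mul_one] at habs'
  rw [mem_uIcc]
  rcases neg_one_pow_eq_or ℝ n with hn | hn <;> rw [hn] at habs habs'
  · exact Or.inl ⟨by linarith, by linarith⟩
  · exact Or.inr ⟨by linarith, by linarith⟩

lemma abs_sub_add_abs_sub_of_mem_uIcc {a b x : ℝ} (hx : x ∈ uIcc a b) :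
    |x - a| + |b - x| = |b - a| := by
  rcases mem_uIcc.1 hx with ⟨hax, hxb⟩ | ⟨hbx, hxa⟩
  · rw [abs_of_nonneg, abs_of_nonneg, abs_of_nonneg] <;> linarith
  · rw [abs_of_nonpos, abs_of_nonpos, abs_of_nonpos] <;> linarith

/- `g_{n+2}` moves `x` twice within `[x, g_n x]`, and the second step is not much shorter than the
first. -/
lemma abs_returnMap_sub_add_two_le (h : IsIrrationalLift F ρ) (hmem : ρ ∈ Ioo (0 : ℝ) 1) {n : ℕ}
    (hC : 0 < C) (hgap : HasGapBounds F (qDen ρ (n + 2)) (qDen ρ (n + 3)) (pNum ρ (n + 2)) C)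
    (x : ℝ) :
    |returnMap F (qDen ρ (n + 2)) (pNum ρ (n + 2)) x - x| ≤
      C / (1 + C) * |returnMap F (qDen ρ n) (pNum ρ n) x - x| := by
  set g := returnMap F (qDen ρ (n + 2)) (pNum ρ (n + 2)) with hg
  have hfirst : g x ∈ uIcc x (g (g x)) := by
    have hmono : Monotone g := (strictMono_returnMap h.strictMono).monotone
    rw [mem_uIcc]
    exact (le_total x (g x)).imp (fun hx => ⟨hx, hmono hx⟩) (fun hx => ⟨hmono hx, hx⟩)
  have hsecond : g (g x) ∈ uIcc x (returnMap F (qDen ρ n) (pNum ρ n) x) := by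
    have hiter : g (g x) = F^[2 * qDen ρ (n + 2)] x - (2 * pNum ρ (n + 2) : ℤ) := by
      simp only [hg, returnMap, h.iterate_sub_int, ← Function.iterate_add_apply, two_mul]
      push_cast
      ring
    have htwo := two_mul_convergentError_add_two_mem_uIcc h.irrational hmem n
    simp only [convergentError, mul_sub, ← mul_assoc] at htwo
    rw [hiter]
    exact h.iterate_sub_int_mem_uIcc (by exact_mod_cast htwo) x
  have hadd := abs_sub_add_abs_sub_of_mem_uIcc hfirst
  have hle := abs_sub_left_of_mem_uIcc hsecond
  rw [← hadd] at hle
  have hgapx := mul_le_mul_of_nonneg_left hle hC.le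
  rw [div_mul_eq_mul_div, le_div_iff₀ (by positivity)]
  linarith [hgap.gap_le x]

theorem abs_returnMap_sub_le_pow (h : IsIrrationalLift F ρ) (hmem : ρ ∈ Ioo (0 : ℝ) 1)
    (hC : 0 < C) (hgap : ∀ n, HasGapBounds F (qDen ρ n) (qDen ρ (n + 1)) (pNum ρ n) C) (n : ℕ)
    (x : ℝ) : |returnMap F (qDen ρ n) (pNum ρ n) x - x| ≤ (C / (1 + C)) ^ (n / 2) := by
  have hbase : ∀ n, |returnMap F (qDen ρ n) (pNum ρ n) x - x| ≤ 1 := fun n => by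
    obtain ⟨hlow, hhigh⟩ := abs_lt.1 (abs_convergentError_lt_one h.irrational hmem n)
    rw [convergentError] at hlow hhigh
    have h1 := h.iterate_add_int_lt (k := qDen ρ n) (l := 0) (p := -pNum ρ n) (r := 1)
      (by push_cast; linarith) x
    have h2 := h.iterate_add_int_lt (k := 0) (l := qDen ρ n) (p := -1) (r := -pNum ρ n)
      (by push_cast; linarith) x
    rw [abs_le, returnMap]
    push_cast [Function.iterate_zero, id_eq] at h1 h2 ⊢
    constructor <;> linarith
  induction n using Nat.twoStepInduction with
  | zero => simpa using hbase 0
  | one => simpa using hbase 1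
  | more n ih _ =>
    refine (abs_returnMap_sub_add_two_le h hmem hC (hgap (n + 2)) x).trans ?_
    rw [Nat.add_div_right n two_pos, pow_succ']
    gcongr

lemma sum_sq_deriv_iterate_mul_sq_le {q q' : ℕ} {p : ℤ} {ε : ℝ} (h : IsIrrationalLift F ρ)
    (hgap : HasGapBounds F q q' p C) (hε : ∀ x, |returnMap F q p x - x| ≤ ε) {x y : ℝ}
    (hx : x ∈ uIcc y (returnMap F q p y)) :
    ∑ m ∈ Finset.range q', (deriv F^[m] x) ^ 2 * (returnMap F q p y - y) ^ 2 ≤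
      2 * C ^ 2 * ε := by
  set G : ℕ → ℝ := fun m => |F^[m] (returnMap F q p y) - F^[m] y|
  have hterm : ∀ m ∈ Finset.range q',
      (deriv F^[m] x) ^ 2 * (returnMap F q p y - y) ^ 2 ≤ C ^ 2 * ε * G m := by
    intro m hm
    have hG : G m ≤ ε := by simpa only [G, iterate_returnMap h] using hε (F^[m] y)
    have : 0 ≤ G m := abs_nonneg _
    have hderiv_nonneg : 0 ≤ deriv F^[m] x := (h.strictMono.iterate m).monotone.deriv_nonneg
    calc (deriv F^[m] x) ^ 2 * (returnMap F q p y - y) ^ 2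
        = (deriv F^[m] x * |returnMap F q p y - y|) ^ 2 := by rw [mul_pow, sq_abs]
      _ ≤ (C * G m) ^ 2 := by
          gcongr 1
          exact hgap.deriv_mul_gap_le m (Finset.mem_range.1 hm).le y x hx
      _ = C ^ 2 * G m * G m := by ring
      _ ≤ C ^ 2 * ε * G m := by gcongr
  have hε₀ : 0 ≤ ε := (abs_nonneg _).trans (hε y)
  calc _ ≤ ∑ m ∈ Finset.range q', C ^ 2 * ε * G m := Finset.sum_le_sum hterm
    _ = C ^ 2 * ε * ∑ m ∈ Finset.range q', G m := by rw [Finset.mul_sum]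
    _ ≤ C ^ 2 * ε * 2 := by gcongr; exact hgap.sum_gap_le y
    _ = 2 * C ^ 2 * ε := by ring

theorem exists_forall_gap_lt_and_sum_sq_le (h : IsIrrationalLift F ρ) (hmem : ρ ∈ Ioo (0 : ℝ) 1)
    (hC : 0 < C) (hgap : ∀ n, HasGapBounds F (qDen ρ n) (qDen ρ (n + 1)) (pNum ρ n) C) {η : ℝ}
    (hη : 0 < η) :
    ∃ n₀, ∀ n ≥ n₀, ∀ y, ∀ x ∈ uIcc y (returnMap F (qDen ρ n) (pNum ρ n) y),
      |returnMap F (qDen ρ n) (pNum ρ n) y - y| < η ∧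
      ∑ m ∈ Finset.range (qDen ρ (n + 1)), (deriv F^[m] x) ^ 2 *
        (returnMap F (qDen ρ n) (pNum ρ n) y - y) ^ 2 ≤ η := by
  have htendsto : Tendsto (fun n : ℕ => (C / (1 + C)) ^ (n / 2)) atTop (𝓝 0) :=
    (tendsto_pow_atTop_nhds_zero_of_lt_one (by positivity)
      ((div_lt_one (by positivity)).2 (lt_one_add C))).comp
        (Nat.tendsto_div_const_atTop two_ne_zero)
  obtain ⟨n₀, hn₀⟩ := eventually_atTop.1 ((htendsto.eventually_lt_const hη).and
    (htendsto.eventually_lt_const (show 0 < η / (2 * C ^ 2) by positivity)))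
  refine ⟨n₀, fun n hn y x hx => ⟨?_, ?_⟩⟩
  · exact (abs_returnMap_sub_le_pow h hmem hC hgap n y).trans_lt (hn₀ n hn).1
  · refine (sum_sq_deriv_iterate_mul_sq_le h (hgap n)
      (abs_returnMap_sub_le_pow h hmem hC hgap n) hx).trans ?_
    have := (lt_div_iff₀ (by positivity)).1 (hn₀ n hn).2
    linarith

lemma atomSet_zero_eq (F : ℝ → ℝ) (ρ x : ℝ) (n : ℕ) :
    atomSet F ρ x n 0 = uIcc x (returnMap F (qDen ρ n) (pNum ρ n) x) := by
  simp [atomSet, returnMap]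

theorem sub_mem_atomSet_zero (h : IsIrrationalLift F ρ) (hmem : ρ ∈ Ioo (0 : ℝ) 1) {n k : ℕ}
    (hk : k < cfDigit ρ (n + 1)) {c x : ℝ}
    (hx : x ∈ atomSet F ρ c (n + 1) (qDen ρ n + k * qDen ρ (n + 1))) :
    x - (pNum ρ n + k * pNum ρ (n + 1) : ℤ) ∈ atomSet F ρ c n 0 := by
  have hends : ∀ k ≤ cfDigit ρ (n + 1), F^[qDen ρ n + k * qDen ρ (n + 1)] c -
      (pNum ρ n + k * pNum ρ (n + 1) : ℤ) ∈ atomSet F ρ c n 0 := by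
    intro k hk
    have herror : (qDen ρ n + k * qDen ρ (n + 1) : ℕ) * ρ -
        (pNum ρ n + k * pNum ρ (n + 1) : ℤ) =
          convergentError ρ n + k * convergentError ρ (n + 1) := by
      simp only [convergentError]
      push_cast
      ring
    rw [atomSet_zero_eq]
    refine h.iterate_sub_int_mem_uIcc ?_ c
    rw [herror, Int.cast_natCast, ← convergentError]
    exact convergentError_add_mul_mem_uIcc h.irrational hmem hk
  have hx' := mem_image_of_mem (fun y => y - ((pNum ρ n + k * pNum ρ (n + 1) : ℤ) : ℝ)) hx
  rw [atomSet, image_sub_const_uIcc] at hx'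
  have hstart := hends k hk.le
  have hend := hends (k + 1) hk
  rw [add_one_mul, ← add_assoc] at hend
  push_cast at hstart hend hx' ⊢
  refine uIcc_subset_uIcc hstart (mem_of_eq_of_mem ?_ hend) hx'
  ring

end DynamicalPartition

/-! ### The Schwarzian derivative -/

section Schwarzian

variable {F G : ℝ → ℝ}

lemma schwarzianDeriv_eq {x : ℝ} (h₁ : DifferentiableAt ℝ (deriv F) x)
    (h₂ : DifferentiableAt ℝ (deriv (deriv F)) x) (hx : deriv F x ≠ 0) :
    schwarzianDeriv F x = deriv (deriv (deriv F)) x / deriv F x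
      - 3 / 2 * (deriv (deriv F) x / deriv F x) ^ 2 := by
  rw [schwarzianDeriv, deriv_fun_div h₂ h₁ hx]
  field_simp
  ring

lemma contDiff_deriv_of_contDiff_three (hF : ContDiff ℝ 3 F) : ContDiff ℝ 2 (deriv F) :=
  ContDiff.deriv' (n := 2) hF

lemma contDiff_deriv_deriv_of_contDiff_three (hF : ContDiff ℝ 3 F) :
    ContDiff ℝ 1 (deriv (deriv F)) :=
  ContDiff.deriv' (n := 1) (contDiff_deriv_of_contDiff_three hF)

lemma hasDerivAt_deriv (hF : ContDiff ℝ 3 F) (x : ℝ) :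
    HasDerivAt (deriv F) (deriv (deriv F) x) x :=
  ((contDiff_deriv_of_contDiff_three hF).differentiable (by norm_num) x).hasDerivAt

lemma hasDerivAt_deriv_deriv (hF : ContDiff ℝ 3 F) (x : ℝ) :
    HasDerivAt (deriv (deriv F)) (deriv (deriv (deriv F)) x) x :=
  ((contDiff_deriv_deriv_of_contDiff_three hF).differentiable (by norm_num) x).hasDerivAt

theorem schwarzianDeriv_comp (hG : ContDiff ℝ 3 G) (hF : ContDiff ℝ 3 F) {x : ℝ}
    (hFx : deriv F x ≠ 0) (hGx : deriv G (F x) ≠ 0) :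
    schwarzianDeriv (G ∘ F) x = schwarzianDeriv G (F x) * deriv F x ^ 2 + schwarzianDeriv F x := by
  have hF' (t : ℝ) : HasDerivAt F (deriv F t) t := (hF.differentiable (by norm_num) t).hasDerivAt
  have hG' (t : ℝ) : HasDerivAt G (deriv G t) t := (hG.differentiable (by norm_num) t).hasDerivAt
  have h₁ : deriv (G ∘ F) = fun t => deriv G (F t) * deriv F t :=
    funext fun t => ((hG' (F t)).comp t (hF' t)).deriv
  have h₂ : deriv (deriv (G ∘ F)) = fun t =>
      deriv (deriv G) (F t) * deriv F t * deriv F t + deriv G (F t) * deriv (deriv F) t := by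
    rw [h₁]
    exact funext fun t =>
      (((hasDerivAt_deriv hG (F t)).comp t (hF' t)).mul (hasDerivAt_deriv hF t)).deriv
  have h₃ : deriv (deriv (deriv (G ∘ F))) x = deriv (deriv (deriv G)) (F x) * deriv F x ^ 3
      + 3 * deriv (deriv G) (F x) * deriv F x * deriv (deriv F) x
      + deriv G (F x) * deriv (deriv (deriv F)) x := by
    rw [h₂]
    refine (HasDerivAt.congr_deriv
      (((((hasDerivAt_deriv_deriv hG (F x)).comp x (hF' x)).mul (hasDerivAt_deriv hF x)).mul
        (hasDerivAt_deriv hF x)).add (((hasDerivAt_deriv hG (F x)).comp x (hF' x)).mul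
          (hasDerivAt_deriv_deriv hF x))) ?_).deriv
    simp only [Pi.mul_apply, Function.comp_apply]
    ring
  have hGF := hG.comp hF
  rw [schwarzianDeriv_eq (hasDerivAt_deriv hGF x).differentiableAt
      (hasDerivAt_deriv_deriv hGF x).differentiableAt (by rw [h₁]; exact mul_ne_zero hGx hFx),
    schwarzianDeriv_eq (hasDerivAt_deriv hG _).differentiableAt
      (hasDerivAt_deriv_deriv hG _).differentiableAt hGx,
    schwarzianDeriv_eq (hasDerivAt_deriv hF x).differentiableAt
      (hasDerivAt_deriv_deriv hF x).differentiableAt hFx, h₃, h₂, h₁]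
  field_simp
  ring

lemma contDiff_iterate {n : WithTop ℕ∞} (hF : ContDiff ℝ n F) (m : ℕ) : ContDiff ℝ n F^[m] := by
  induction m with
  | zero => exact contDiff_id
  | succ m ih => exact ih.comp hF

lemma deriv_iterate_succ (hF : Differentiable ℝ F) (m : ℕ) (x : ℝ) :
    deriv F^[m + 1] x = deriv F (F^[m] x) * deriv F^[m] x := by
  rw [Function.iterate_succ']
  exact deriv_comp x (hF _) (hF.iterate m x)

lemma deriv_iterate_ne_zero_of_le (hF : Differentiable ℝ F) {m q : ℕ} (hmq : m ≤ q) {x : ℝ}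
    (hx : deriv F^[q] x ≠ 0) : deriv F^[m] x ≠ 0 := by
  induction q, hmq using Nat.le_induction with
  | base => exact hx
  | succ q _ ih => exact ih (right_ne_zero_of_mul (deriv_iterate_succ hF q x ▸ hx))

lemma deriv_apply_iterate_ne_zero_of_lt (hF : Differentiable ℝ F) {m q : ℕ} (hmq : m < q) {x : ℝ}
    (hx : deriv F^[q] x ≠ 0) : deriv F (F^[m] x) ≠ 0 :=
  left_ne_zero_of_mul (deriv_iterate_succ hF m x ▸ deriv_iterate_ne_zero_of_le hF hmq hx)

theorem schwarzianDeriv_iterate (hF : ContDiff ℝ 3 F) {q : ℕ} {x : ℝ} (hx : deriv F^[q] x ≠ 0) :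
    schwarzianDeriv F^[q] x =
      ∑ m ∈ Finset.range q, schwarzianDeriv F (F^[m] x) * deriv F^[m] x ^ 2 := by
  have hdiff : Differentiable ℝ F := hF.differentiable (by norm_num)
  induction q with
  | zero => simp [schwarzianDeriv, deriv_id']
  | succ q ih =>
    have hq : deriv F^[q] x ≠ 0 := deriv_iterate_ne_zero_of_le hdiff q.le_succ hx
    rw [Finset.sum_range_succ, ← ih hq, Function.iterate_succ',
      schwarzianDeriv_comp hF (contDiff_iterate hF q) hq
        (deriv_apply_iterate_ne_zero_of_lt hdiff q.lt_succ_self hx), add_comm]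

/- The term `m = 0`, of size `κ / ℓ ^ 2`, dominates all the others. -/
lemma schwarzianDeriv_iterate_neg {q : ℕ} {y B ℓ κ η : ℝ} (hF : ContDiff ℝ 3 F)
    (hq : 0 < q) (hy : deriv F^[q] y ≠ 0) (hB : 0 ≤ B)
    (hle : ∀ x, deriv F x ≠ 0 → schwarzianDeriv F x ≤ B)
    (hlocal : schwarzianDeriv F y * ℓ ^ 2 ≤ -κ)
    (hsum : ∑ m ∈ Finset.range q, (deriv F^[m] y) ^ 2 * ℓ ^ 2 ≤ η) (hη : B * η < κ) :
    schwarzianDeriv F^[q] y < 0 := by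
  rw [schwarzianDeriv_iterate hF hy]
  refine neg_of_mul_neg_left (b := ℓ ^ 2) ?_ (sq_nonneg ℓ)
  obtain ⟨q, rfl⟩ := Nat.exists_eq_add_one.2 hq
  have htail : ∑ m ∈ Finset.range q, (deriv F^[m + 1] y) ^ 2 * ℓ ^ 2 ≤ η := by
    rw [Finset.sum_range_succ'] at hsum
    exact (le_add_of_nonneg_right (by positivity)).trans hsum
  rw [Finset.sum_range_succ', add_mul, Finset.sum_mul]
  simp only [Function.iterate_zero, id, deriv_id', one_pow, mul_one, mul_assoc]
  calc
    _ ≤ ∑ m ∈ Finset.range q, B * ((deriv F^[m + 1] y) ^ 2 * ℓ ^ 2) + -κ := by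
      gcongr with m hm
      exact hle _ (deriv_apply_iterate_ne_zero_of_lt (hF.differentiable (by norm_num))
        (Nat.succ_lt_succ (Finset.mem_range.1 hm)) hy)
    _ ≤ B * η + -κ := by
      rw [← Finset.mul_sum]
      gcongr
    _ < 0 := by linarith

lemma deriv_add_of_map_add {k p : ℝ} (h : ∀ x, F (x + k) = F x + p) (x : ℝ) :
    deriv F (x + k) = deriv F x := by
  rw [← deriv_comp_add_const, funext h, deriv_add_const]

lemma schwarzianDeriv_add_of_map_add {k p : ℝ} (h : ∀ x, F (x + k) = F x + p) (x : ℝ) :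
    schwarzianDeriv F (x + k) = schwarzianDeriv F x := by
  have h₁ := deriv_add_of_map_add h
  have h₂ := deriv_add_of_map_add (F := deriv F) (k := k) (p := 0) fun x => by rw [h₁, add_zero]
  have h₃ := deriv_add_of_map_add (F := fun y => deriv (deriv F) y / deriv F y) (k := k) (p := 0)
    fun x => by rw [h₁, h₂, add_zero]
  rw [schwarzianDeriv, h₁, h₂, h₃, schwarzianDeriv]

lemma hasDerivAt_abs_sub_rpow {c σ x : ℝ} (hx : x ≠ c) :
    HasDerivAt (fun t => |t - c| ^ σ) (σ * |x - c| ^ σ / (x - c)) x := by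
  have hxc : x - c ≠ 0 := sub_ne_zero.2 hx
  have hne : |x - c| ≠ 0 := abs_ne_zero.2 hxc
  have habs : HasDerivAt (fun t => |t - c|) (SignType.sign (x - c) : ℝ) x :=
    (hasDerivAt_abs hxc).comp_sub_const x c
  have hsign : (SignType.sign (x - c) : ℝ) / |x - c| = 1 / (x - c) := by
    rw [div_eq_div_iff hne hxc, sign_mul_self, one_mul]
  refine (habs.rpow_const (Or.inl hne)).congr_deriv ?_
  calc (SignType.sign (x - c) : ℝ) * σ * |x - c| ^ (σ - 1)
      = σ * |x - c| ^ σ * (SignType.sign (x - c) / |x - c|) := by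
        rw [Real.rpow_sub_one hne]
        ring
    _ = σ * |x - c| ^ σ / (x - c) := by rw [hsign, mul_one_div]

lemma schwarzianDeriv_mul_sq_of_deriv_eq {a c σ x : ℝ} (ha : a ≠ 0) (hx : x ≠ c)
    (hF : ∀ᶠ y in 𝓝 x, deriv F y = a * |y - c| ^ σ) :
    schwarzianDeriv F x * (x - c) ^ 2 = -(σ * (σ + 2) / 2) := by
  have hnonlin : ∀ᶠ y in 𝓝 x, deriv (deriv F) y / deriv F y = σ * (y - c)⁻¹ := by
    filter_upwards [hF.eventually_nhds, isOpen_ne.mem_nhds hx] with y hy hyc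
    have hyc' : y - c ≠ 0 := sub_ne_zero.2 hyc
    have : |y - c| ^ σ ≠ 0 := (Real.rpow_pos_of_pos (abs_pos.2 hyc') σ).ne'
    rw [hy.self_of_nhds, Filter.EventuallyEq.deriv_eq hy,
      ((hasDerivAt_abs_sub_rpow hyc).const_mul a).deriv]
    field_simp
  have hxc : x - c ≠ 0 := sub_ne_zero.2 hx
  rw [schwarzianDeriv, hnonlin.self_of_nhds, Filter.EventuallyEq.deriv_eq hnonlin,
    ((((hasDerivAt_id' x).sub_const c).fun_inv hxc).const_mul σ).deriv]
  field_simp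
  ring

theorem eventually_schwarzianDeriv_mul_sq_eq {b c σ : ℝ} (hσ : σ + 1 ≠ 0)
    (hF : ∀ᶠ x in 𝓝 c, F x = b + (x - c) * |x - c| ^ σ) :
    ∀ᶠ x in 𝓝[≠] c, schwarzianDeriv F x * (x - c) ^ 2 = -(σ * (σ + 2) / 2) := by
  have hderiv : ∀ᶠ x in 𝓝 c, x ≠ c → deriv F x = (σ + 1) * |x - c| ^ σ := by
    filter_upwards [hF.eventually_nhds] with x hx hxc
    have hxc' : x - c ≠ 0 := sub_ne_zero.2 hxc
    rw [Filter.EventuallyEq.deriv_eq hx, ((((hasDerivAt_id' x).sub_const c).fun_mul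
      (hasDerivAt_abs_sub_rpow hxc)).const_add b).deriv]
    field_simp
    ring
  refine eventually_nhdsWithin_of_eventually_nhds hderiv.eventually_nhds |>.mp ?_
  filter_upwards [self_mem_nhdsWithin] with x hxc hx
  refine schwarzianDeriv_mul_sq_of_deriv_eq hσ hxc ?_
  filter_upwards [hx, isOpen_ne.mem_nhds hxc] with y hy hyc using hy hyc

end Schwarzian

/-! ### Cross-ratio distortion of smooth maps -/

section Distortion

variable {F : ℝ → ℝ}

lemma hasDerivAt_inv_sqrt {D : ℝ → ℝ} {D' t : ℝ} (hD : HasDerivAt D D' t) (hpos : 0 < D t) :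
    HasDerivAt (fun s => (√(D s))⁻¹) (-(D' / D t / 2) * (√(D t))⁻¹) t := by
  have hsqrt : √(D t) ≠ 0 := (Real.sqrt_pos.2 hpos).ne'
  refine ((hD.sqrt hpos.ne').fun_inv hsqrt).congr_deriv ?_
  rw [Real.sq_sqrt hpos.le]
  field_simp

/- The functions `1 / √F'` and `F / √F'` solve the linear equation `w'' = -(SF / 2) w`, so
a nonpositive Schwarzian derivative makes `(F - F x) / √F'` convex to the right of `x`. -/
lemma convexOn_sub_mul_inv_sqrt_deriv (hF : ContDiff ℝ 3 F) {x y : ℝ}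
    (hpos : ∀ t ∈ Icc x y, 0 < deriv F t) (hS : ∀ t ∈ Icc x y, schwarzianDeriv F t ≤ 0) :
    ConvexOn ℝ (Icc x y) fun t => (F t - F x) * (√(deriv F t))⁻¹ := by
  have hdiff : Differentiable ℝ F := hF.differentiable (by norm_num)
  set u : ℝ → ℝ := fun t => (√(deriv F t))⁻¹
  set r : ℝ → ℝ := fun t => deriv (deriv F) t / deriv F t
  have hu (t) (ht : t ∈ Icc x y) : HasDerivAt u (-(r t / 2) * u t) t :=
    hasDerivAt_inv_sqrt (hasDerivAt_deriv hF t) (hpos t ht)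
  have hr' (t) (ht : t ∈ Icc x y) : HasDerivAt r (deriv r t) t :=
    ((hasDerivAt_deriv_deriv hF t).differentiableAt.fun_div
      (hasDerivAt_deriv hF t).differentiableAt (hpos t ht).ne').hasDerivAt
  have hw (t) (ht : t ∈ Icc x y) : HasDerivAt (fun t => (F t - F x) * u t)
      (deriv F t * u t - r t / 2 * ((F t - F x) * u t)) t :=
    (((hdiff t).hasDerivAt.sub_const (F x)).fun_mul (hu t ht)).congr_deriv (by ring)
  have hw' (t) (ht : t ∈ Icc x y) :
      HasDerivAt (fun t => deriv F t * u t - r t / 2 * ((F t - F x) * u t))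
        (-(schwarzianDeriv F t / 2) * ((F t - F x) * u t)) t := by
    refine (((hasDerivAt_deriv hF t).fun_mul (hu t ht)).fun_sub
      (((hr' t ht).div_const 2).fun_mul (hw t ht))).congr_deriv ?_
    have hF'' : deriv (deriv F) t = r t * deriv F t := (div_mul_cancel₀ _ (hpos t ht).ne').symm
    have hSt : schwarzianDeriv F t = deriv r t - 1 / 2 * r t ^ 2 := rfl
    rw [hSt, hF'']
    ring
  have hmono : MonotoneOn F (Icc x y) :=
    monotoneOn_of_deriv_nonneg (convex_Icc x y) hdiff.continuous.continuousOn
      hdiff.differentiableOn fun t ht => (hpos t (interior_subset ht)).le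
  refine convexOn_of_hasDerivWithinAt2_nonneg (convex_Icc x y)
    (fun t ht => (hw t ht).continuousAt.continuousWithinAt)
    (fun t ht => (hw t (interior_subset ht)).hasDerivWithinAt)
    (fun t ht => (hw' t (interior_subset ht)).hasDerivWithinAt) fun t ht => ?_
  have ht := interior_subset ht
  have hSt := hS t ht
  have hFt := hmono (left_mem_Icc.2 (ht.1.trans ht.2)) ht ht.1
  exact mul_nonneg (by linarith) (mul_nonneg (by linarith) (by positivity))

theorem deriv_mul_deriv_mul_sq_le (hF : ContDiff ℝ 3 F) {x y : ℝ} (hxy : x < y)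
    (hpos : ∀ t ∈ Icc x y, 0 < deriv F t) (hS : ∀ t ∈ Icc x y, schwarzianDeriv F t ≤ 0) :
    deriv F x * deriv F y * (y - x) ^ 2 ≤ (F y - F x) ^ 2 := by
  have hx := left_mem_Icc.2 hxy.le
  have hy := right_mem_Icc.2 hxy.le
  have hderiv := ((hF.differentiable (by norm_num) x).hasDerivAt.sub_const (F x)).fun_mul
    (hasDerivAt_inv_sqrt (hasDerivAt_deriv hF x) (hpos x hx))
  have htangent := (convexOn_sub_mul_inv_sqrt_deriv hF hpos hS).le_slope_of_hasDerivAt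
    hx hy hxy hderiv
  have hFx := hpos x hx
  have hFy := hpos y hy
  have hxx : deriv F x * (√(deriv F x))⁻¹ = √(deriv F x) := by
    rw [← div_eq_mul_inv, Real.div_sqrt]
  rw [slope_def_field, sub_self, zero_mul, zero_mul, sub_zero, add_zero, hxx,
    le_div_iff₀ (sub_pos.2 hxy), ← div_eq_mul_inv, le_div_iff₀ (Real.sqrt_pos.2 hFy)] at htangent
  calc deriv F x * deriv F y * (y - x) ^ 2
      = (√(deriv F x) * (y - x) * √(deriv F y)) ^ 2 := by
        rw [mul_pow, mul_pow, Real.sq_sqrt hFx.le, Real.sq_sqrt hFy.le]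
        ring
    _ ≤ (F y - F x) ^ 2 := by
        have := sub_pos.2 hxy
        gcongr

lemma log_one_sub_crossRatio {a b c d : ℝ} (hab : a < b) (hbc : b < c) (hcd : c < d) :
    Real.log (1 - crossRatio a b c d) =
      Real.log (d - a) - Real.log (c - a) - (Real.log (d - b) - Real.log (c - b)) := by
  have hac : c - a ≠ 0 := by linarith
  have hbd : d - b ≠ 0 := by linarith
  have : 1 - crossRatio a b c d = (d - a) * (c - b) / ((c - a) * (d - b)) := by
    unfold crossRatio
    field_simp
    ring
  rw [this, Real.log_div (mul_ne_zero (by linarith) (by linarith)) (mul_ne_zero hac hbd),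
    Real.log_mul (by linarith) (by linarith), Real.log_mul hac hbd]
  ring

lemma crossRatio_lt_one {a b c d : ℝ} (hab : a < b) (hbc : b < c) (hcd : c < d) :
    crossRatio a b c d < 1 := by
  rw [crossRatio, div_lt_one (mul_pos (by linarith) (by linarith))]
  nlinarith

lemma deriv_div_sub_deriv_div_le (hF : Differentiable ℝ F) (hmono : StrictMono F) {t c d : ℝ}
    (htc : t < c) (hcd : c ≤ d)
    (h : ∀ y ∈ Icc c d, deriv F t * deriv F y * (y - t) ^ 2 ≤ (F y - F t) ^ 2) :
    deriv F t / (F c - F t) - deriv F t / (F d - F t) ≤ 1 / (c - t) - 1 / (d - t) := by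
  have hderiv (y) (hy : y ∈ Icc c d) :
      HasDerivAt (fun y => deriv F t * (F y - F t)⁻¹ - (y - t)⁻¹)
        (1 / (y - t) ^ 2 - deriv F t * deriv F y / (F y - F t) ^ 2) y := by
    have hty : t < y := htc.trans_le hy.1
    refine (((((hF y).hasDerivAt.sub_const (F t)).fun_inv (sub_pos.2 (hmono hty)).ne').const_mul
      (deriv F t)).fun_sub (((hasDerivAt_id' y).sub_const t).fun_inv
        (sub_pos.2 hty).ne')).congr_deriv ?_
    ring
  have hmonoOn : MonotoneOn (fun y => deriv F t * (F y - F t)⁻¹ - (y - t)⁻¹) (Icc c d) := by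
    refine monotoneOn_of_hasDerivWithinAt_nonneg (convex_Icc c d)
      (fun y hy => (hderiv y hy).continuousAt.continuousWithinAt)
      (fun y hy => (hderiv y (interior_subset hy)).hasDerivWithinAt) fun y hy => ?_
    have hy := interior_subset hy
    have hty : t < y := htc.trans_le hy.1
    rw [sub_nonneg, div_le_div_iff₀ (pow_pos (sub_pos.2 (hmono hty)) 2)
      (pow_pos (sub_pos.2 hty) 2), one_mul]
    exact h y hy
  have := hmonoOn (left_mem_Icc.2 hcd) (right_mem_Icc.2 hcd) hcd
  simp only [div_eq_mul_inv, one_mul]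
  linarith

theorem crossRatio_map_le_of_deriv_mul_deriv_le (hF : Differentiable ℝ F) (hmono : StrictMono F)
    {a b c d : ℝ} (hab : a < b) (hbc : b < c) (hcd : c < d)
    (h : ∀ x ∈ Icc a b, ∀ y ∈ Icc c d,
      deriv F x * deriv F y * (y - x) ^ 2 ≤ (F y - F x) ^ 2) :
    crossRatio (F a) (F b) (F c) (F d) ≤ crossRatio a b c d := by
  set ψ : ℝ → ℝ := fun t => Real.log (F d - F t) - Real.log (F c - F t) -
    (Real.log (d - t) - Real.log (c - t)) with hψ
  have hderiv (t) (ht : t ∈ Icc a b) : HasDerivAt ψ (deriv F t / (F c - F t) -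
      deriv F t / (F d - F t) - (1 / (c - t) - 1 / (d - t))) t := by
    have htc : t < c := ht.2.trans_lt hbc
    have htd : t < d := htc.trans hcd
    have hFt := (hF t).hasDerivAt
    refine ((((hFt.const_sub (F d)).log (sub_pos.2 (hmono htd)).ne').fun_sub
      ((hFt.const_sub (F c)).log (sub_pos.2 (hmono htc)).ne')).fun_sub
      ((((hasDerivAt_id' t).const_sub d).log (sub_pos.2 htd).ne').fun_sub
        (((hasDerivAt_id' t).const_sub c).log (sub_pos.2 htc).ne'))).congr_deriv ?_
    ring
  have hanti : AntitoneOn ψ (Icc a b) :=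
    antitoneOn_of_hasDerivWithinAt_nonpos (convex_Icc a b)
      (fun t ht => (hderiv t ht).continuousAt.continuousWithinAt)
      (fun t ht => (hderiv t (interior_subset ht)).hasDerivWithinAt) fun t ht =>
        sub_nonpos.2 (deriv_div_sub_deriv_div_le hF hmono
          ((interior_subset ht).2.trans_lt hbc) hcd.le (h t (interior_subset ht)))
  have hlog : Real.log (1 - crossRatio a b c d) ≤
      Real.log (1 - crossRatio (F a) (F b) (F c) (F d)) := by
    rw [log_one_sub_crossRatio hab hbc hcd,
      log_one_sub_crossRatio (hmono hab) (hmono hbc) (hmono hcd)]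
    have := hanti (left_mem_Icc.2 hab.le) (right_mem_Icc.2 hab.le) hab.le
    simp only [hψ] at this
    linarith
  rw [Real.log_le_log_iff (sub_pos.2 (crossRatio_lt_one hab hbc hcd))
    (sub_pos.2 (crossRatio_lt_one (hmono hab) (hmono hbc) (hmono hcd)))] at hlog
  linarith

lemma crossRatio_map_le_mul_crossRatio (hF : Differentiable ℝ F) (hmono : StrictMono F) {K : ℝ}
    {a b c d : ℝ} (hab : a < b) (hbc : b < c) (hcd : c < d)
    (hac : ∀ ξ ∈ Icc a c, deriv F ξ * (c - a) ≤ K * (F c - F a))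
    (hbd : ∀ ξ ∈ Icc b d, deriv F ξ * (d - b) ≤ K * (F d - F b)) :
    crossRatio (F a) (F b) (F c) (F d) ≤ K ^ 2 * crossRatio a b c d := by
  obtain ⟨ξ, hξ, hξ_eq⟩ := exists_deriv_eq_slope F hab hF.continuous.continuousOn
    hF.differentiableOn
  obtain ⟨ζ, hζ, hζ_eq⟩ := exists_deriv_eq_slope F hcd hF.continuous.continuousOn
    hF.differentiableOn
  have hFab := hmono hab
  have hFbc := hmono hbc
  have hFcd := hmono hcd
  have hleft : (F b - F a) / (F c - F a) ≤ K * ((b - a) / (c - a)) := by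
    have := hac ξ ⟨hξ.1.le, (hξ.2.trans hbc).le⟩
    rw [hξ_eq, div_mul_eq_mul_div, div_le_iff₀ (by linarith)] at this
    rw [mul_div_assoc', div_le_div_iff₀ (by linarith) (by linarith)]
    linarith
  have hright : (F d - F c) / (F d - F b) ≤ K * ((d - c) / (d - b)) := by
    have := hbd ζ ⟨(hbc.trans hζ.1).le, hζ.2.le⟩
    rw [hζ_eq, div_mul_eq_mul_div, div_le_iff₀ (by linarith)] at this
    rw [mul_div_assoc', div_le_div_iff₀ (by linarith) (by linarith)]
    linarith
  calc crossRatio (F a) (F b) (F c) (F d)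
      = (F b - F a) / (F c - F a) * ((F d - F c) / (F d - F b)) := crossRatio_eq_mul ..
    _ ≤ K * ((b - a) / (c - a)) * (K * ((d - c) / (d - b))) :=
        mul_le_mul hleft hright (div_nonneg (by linarith) (by linarith))
          ((div_nonneg (by linarith) (by linarith)).trans hleft)
    _ = K ^ 2 * crossRatio a b c d := by
        rw [crossRatio_eq_mul]
        ring

lemma mul_sub_le_sub_of_le_deriv (hF : Differentiable ℝ F) {m a b : ℝ} (hab : a ≤ b)
    (h : ∀ t ∈ Icc a b, m ≤ deriv F t) : m * (b - a) ≤ F b - F a :=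
  (convex_Icc a b).mul_sub_le_image_sub_of_le_deriv hF.continuous.continuousOn
    hF.differentiableOn (fun t ht => h t (interior_subset ht)) a (left_mem_Icc.2 hab) b
    (right_mem_Icc.2 hab) hab

lemma deriv_mul_sub_le_exp_mul (hF : Differentiable ℝ F) {Λ a b ξ : ℝ}
    (hpos : ∀ t ∈ Icc a b, 0 < deriv F t)
    (hlip : ∀ x ∈ Icc a b, ∀ y ∈ Icc a b,
      Real.log (deriv F x) - Real.log (deriv F y) ≤ Λ) (hξ : ξ ∈ Icc a b) :
    deriv F ξ * (b - a) ≤ Real.exp Λ * (F b - F a) := by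
  have hlow : ∀ t ∈ Icc a b, Real.exp (-Λ) * deriv F ξ ≤ deriv F t := fun t ht => by
    rw [← Real.exp_log (hpos ξ hξ), ← Real.exp_log (hpos t ht), ← Real.exp_add, Real.exp_le_exp]
    linarith [hlip ξ hξ t ht]
  have := mul_sub_le_sub_of_le_deriv hF (hξ.1.trans hξ.2) hlow
  calc deriv F ξ * (b - a) = Real.exp Λ * (Real.exp (-Λ) * deriv F ξ * (b - a)) := by
        rw [mul_assoc, ← mul_assoc, ← Real.exp_add, add_neg_cancel, Real.exp_zero, one_mul]
    _ ≤ Real.exp Λ * (F b - F a) := by gcongr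

end Distortion

/-! ### From local to global estimates -/

section LocalToGlobal

variable {F : ℝ → ℝ}

lemma exists_forall_interval_of_forall_nhds {P : ℝ → ℝ → ℝ → Prop}
    (hmono : ∀ ⦃K K' a b⦄, K ≤ K' → P K a b → P K' a b)
    (hper : ∀ ⦃K a b⦄ (m : ℤ), P K (a - m) (b - m) → P K a b)
    (hloc : ∀ z, ∃ U ∈ 𝓝 z, ∃ K, ∀ a b, a ≤ b → Icc a b ⊆ U → P K a b) :
    ∃ K, ∃ δ > 0, ∀ a b, a ≤ b → b - a < δ → P K a b := by
  suffices h : ∃ K, ∃ δ > 0, ∀ a ∈ Icc (0 : ℝ) 1, ∀ b, a ≤ b → b - a < δ → P K a b by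
    obtain ⟨K, δ, hδ, h⟩ := h
    refine ⟨K, δ, hδ, fun a b hab hlt => hper ⌊a⌋ (h _ ?_ _ (by linarith) (by linarith))⟩
    constructor <;> linarith [Int.floor_le a, Int.lt_floor_add_one a]
  refine isCompact_Icc.induction_on
    (p := fun s => ∃ K, ∃ δ > 0, ∀ a ∈ s, ∀ b, a ≤ b → b - a < δ → P K a b)
    ⟨0, 1, one_pos, by simp⟩ ?_ ?_ ?_
  · rintro s t hst ⟨K, δ, hδ, h⟩
    exact ⟨K, δ, hδ, fun a ha => h a (hst ha)⟩
  · rintro s t ⟨K, δ, hδ, h⟩ ⟨K', δ', hδ', h'⟩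
    refine ⟨max K K', min δ δ', lt_min hδ hδ', ?_⟩
    rintro a (ha | ha) b hab hlt
    · exact hmono (le_max_left K K') (h a ha b hab (hlt.trans_le (min_le_left _ _)))
    · exact hmono (le_max_right K K') (h' a ha b hab (hlt.trans_le (min_le_right _ _)))
  · intro z _
    obtain ⟨U, hU, K, h⟩ := hloc z
    obtain ⟨r, hr, hrU⟩ := Metric.mem_nhds_iff.1 hU
    rw [Real.ball_eq_Ioo] at hrU
    refine ⟨Ioo (z - r) (z + r / 2),
      mem_nhdsWithin_of_mem_nhds (Ioo_mem_nhds (by linarith) (by linarith)), K, r / 2,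
      half_pos hr, fun a ha b hab hlt => h a b hab fun t ht => hrU ⟨?_, ?_⟩⟩
    · linarith [ha.1, ht.1]
    · linarith [ha.2, ht.2]

lemma exists_forall_deriv_le (hF : ContDiff ℝ 1 F) (hone : ∀ x, F (x + 1) = F x + 1) :
    ∃ M, ∀ x, deriv F x ≤ M := by
  have hper : Function.Periodic (deriv F) 1 := deriv_add_of_map_add hone
  obtain ⟨M, hM⟩ :=
    (hper.compact_of_continuous one_ne_zero (hF.continuous_deriv le_rfl)).bddAbove
  exact ⟨M, fun x => hM (mem_range_self x)⟩

lemma exists_forall_le_map_add_sub (hF : Continuous F) (hmono : StrictMono F)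
    (hone : ∀ x, F (x + 1) = F x + 1) {δ : ℝ} (hδ : 0 < δ) :
    ∃ μ > 0, ∀ x, μ ≤ F (x + δ) - F x := by
  have hper : Function.Periodic (fun x => F (x + δ) - F x) 1 := fun x => by
    simp only [add_right_comm x 1 δ, hone, add_sub_add_right_eq_sub]
  obtain ⟨_, ⟨z, rfl⟩, hz⟩ := (hper.compact_of_continuous one_ne_zero
    (by fun_prop)).exists_isLeast (range_nonempty _)
  exact ⟨_, sub_pos.2 (hmono (lt_add_of_pos_right z hδ)), fun x => hz (mem_range_self x)⟩

lemma sub_le_map_sub_add_one (hmono : Monotone F) (hone : ∀ x, F (x + 1) = F x + 1) (a b : ℝ) :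
    b - a ≤ F b - F a + 1 := by
  have hfloor : F (a + ⌊b - a⌋) ≤ F b := hmono (by linarith [Int.floor_le (b - a)])
  rw [map_add_int_of_map_add_one hone, mul_one] at hfloor
  linarith [Int.lt_floor_add_one (b - a)]

lemma exists_deriv_mul_sub_le_of_le_sub (hF : ContDiff ℝ 1 F) (hmono : StrictMono F)
    (hone : ∀ x, F (x + 1) = F x + 1) {δ : ℝ} (hδ : 0 < δ) :
    ∃ K, ∀ a b, δ ≤ b - a → ∀ ξ, deriv F ξ * (b - a) ≤ K * (F b - F a) := by
  obtain ⟨M, hM⟩ := exists_forall_deriv_le hF hone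
  obtain ⟨μ, hμ, hμ'⟩ := exists_forall_le_map_add_sub hF.continuous hmono hone hδ
  have hM₀ : 0 ≤ M := hmono.monotone.deriv_nonneg.trans (hM 0)
  refine ⟨M * (1 + 1 / μ), fun a b hab ξ => ?_⟩
  have himage : μ ≤ F b - F a := by
    linarith [hμ' a, hmono.monotone (show a + δ ≤ b by linarith)]
  have hlength : b - a ≤ (1 + 1 / μ) * (F b - F a) := calc
    b - a ≤ F b - F a + 1 := sub_le_map_sub_add_one hmono.monotone hone a b
    _ ≤ F b - F a + (F b - F a) / μ := by gcongr; rwa [one_le_div hμ]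
    _ = (1 + 1 / μ) * (F b - F a) := by ring
  calc deriv F ξ * (b - a) ≤ M * ((1 + 1 / μ) * (F b - F a)) :=
        mul_le_mul (hM ξ) hlength (by linarith) hM₀
    _ = M * (1 + 1 / μ) * (F b - F a) := by ring

lemma exists_quarter_subinterval_far (c : ℝ) {a b : ℝ} (hab : a ≤ b) :
    ∃ u v, a ≤ u ∧ v ≤ b ∧ v - u = (b - a) / 4 ∧
      ∀ t ∈ Icc u v, max |a - c| |b - c| / 2 ≤ |t - c| := by
  rcases le_total (a + b) (2 * c) with hc | hc
  · refine ⟨a, a + (b - a) / 4, le_rfl, by linarith, by ring, fun t ht => ?_⟩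
    have hmax : max |a - c| |b - c| ≤ c - a :=
      max_le (abs_le.2 ⟨by linarith, by linarith⟩) (abs_le.2 ⟨by linarith, by linarith⟩)
    linarith [neg_le_abs (t - c), ht.2]
  · refine ⟨b - (b - a) / 4, b, by linarith, le_rfl, by ring, fun t ht => ?_⟩
    have hmax : max |a - c| |b - c| ≤ b - c :=
      max_le (abs_le.2 ⟨by linarith, by linarith⟩) (abs_le.2 ⟨by linarith, by linarith⟩)
    linarith [le_abs_self (t - c), ht.1]

lemma deriv_mul_sub_le_of_power_law (hF : Differentiable ℝ F) (hmono : Monotone F)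
    {α β σ c a b ξ : ℝ} (hα : 0 < α) (hβ : 0 ≤ β) (hσ : 0 ≤ σ)
    (hlow : ∀ t ∈ Icc a b, α * |t - c| ^ σ ≤ deriv F t) (hup : deriv F ξ ≤ β * |ξ - c| ^ σ)
    (hξ : ξ ∈ Icc a b) :
    deriv F ξ * (b - a) ≤ 4 * 2 ^ σ * β / α * (F b - F a) := by
  have hab : a ≤ b := hξ.1.trans hξ.2
  obtain ⟨u, v, hau, hvb, huv, hfar⟩ := exists_quarter_subinterval_far c hab
  set R := max |a - c| |b - c|
  have hξR : |ξ - c| ≤ R :=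
    abs_le_max_abs_abs (sub_le_sub_right hξ.1 c) (sub_le_sub_right hξ.2 c)
  have : 0 ≤ R := (abs_nonneg _).trans hξR
  have himage : α * (R / 2) ^ σ * (v - u) ≤ F b - F a := by
    have := mul_sub_le_sub_of_le_deriv hF (m := α * (R / 2) ^ σ) (a := u) (b := v) (by linarith)
      fun t ht => le_trans (by gcongr; exact hfar t ht) (hlow t ⟨hau.trans ht.1, ht.2.trans hvb⟩)
    linarith [hmono hau, hmono hvb]
  have hscale : R ^ σ = 2 ^ σ * (R / 2) ^ σ := by
    rw [← Real.mul_rpow zero_le_two (by positivity), mul_div_cancel₀ R two_ne_zero]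
  calc deriv F ξ * (b - a) ≤ β * R ^ σ * (b - a) :=
        mul_le_mul_of_nonneg_right (hup.trans (by gcongr)) (sub_nonneg.2 hab)
    _ = 4 * 2 ^ σ * β / α * (α * (R / 2) ^ σ * (v - u)) := by
        rw [hscale, huv]
        field_simp
    _ ≤ 4 * 2 ^ σ * β / α * (F b - F a) := by gcongr

lemma exists_nhds_deriv_mul_sub_le_exp (hF : ContDiff ℝ 2 F) {z : ℝ} (hz : 0 < deriv F z) :
    ∃ U ∈ 𝓝 z, ∃ K, 0 ≤ K ∧ ∀ a b, Icc a b ⊆ U → ∀ ξ ∈ Icc a b,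
      deriv F ξ * (b - a) ≤ Real.exp (K * (b - a)) * (F b - F a) := by
  have hF' : ContDiff ℝ 1 (deriv F) := ContDiff.deriv' (n := 1) hF
  obtain ⟨K, V, hV, hlip⟩ := (hF'.contDiffAt.log hz.ne').exists_lipschitzOnWith
  refine ⟨V ∩ {t | 0 < deriv F t}, inter_mem hV
    (hF'.continuous.continuousAt.eventually_const_lt hz), K, K.2, fun a b hab ξ hξ => ?_⟩
  refine deriv_mul_sub_le_exp_mul (hF.differentiable two_ne_zero) (fun t ht => (hab ht).2) ?_ hξ
  intro x hx y hy
  calc Real.log (deriv F x) - Real.log (deriv F y)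
      ≤ K * |x - y| := (le_abs_self _).trans (hlip.dist_le_mul x (hab hx).1 y (hab hy).1)
    _ ≤ K * (b - a) := by
        gcongr
        exact abs_sub_le_of_le_of_le hx.1 hx.2 hy.1 hy.2

end LocalToGlobal

/-! ### Multicritical circle maps -/

namespace MCM

variable (f : MCM)

lemma differentiable : Differentiable ℝ f.F := f.smooth.differentiable (by norm_num)

lemma isIrrationalLift {ρ : ℝ} (hirr : Irrational ρ) (hrot : HasRotationNumber f.F ρ) :
    IsIrrationalLift f.F ρ :=
  ⟨f.mono, f.smooth.continuous, f.deg1, hirr, hrot⟩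

lemma map_add_int (x : ℝ) (k : ℤ) : f.F (x + k) = f.F x + k := by
  simpa using map_add_int_of_map_add_one f.deg1 x k

lemma map_sub_int (x : ℝ) (k : ℤ) : f.F (x - k) = f.F x - k := by
  simpa [sub_eq_add_neg] using f.map_add_int x (-k)

lemma deriv_sub_int (x : ℝ) (k : ℤ) : deriv f.F (x - k) = deriv f.F x := by
  simpa [sub_eq_add_neg] using deriv_add_of_map_add (f.map_add_int · (-k)) x

lemma schwarzianDeriv_sub_int (x : ℝ) (k : ℤ) :
    schwarzianDeriv f.F (x - k) = schwarzianDeriv f.F x := by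
  simpa [sub_eq_add_neg] using schwarzianDeriv_add_of_map_add (f.map_add_int · (-k)) x

lemma deriv_nonneg (x : ℝ) : 0 ≤ deriv f.F x := f.mono.monotone.deriv_nonneg

lemma eventually_near_critical_point {z : ℝ} (hz : deriv f.F z = 0) :
    ∃ i, ∀ᶠ x in 𝓝 z, (deriv f.F x ≠ 0 → schwarzianDeriv f.F x < 0) ∧
      f.al i * |x - z| ^ (f.s i - 1) ≤ deriv f.F x ∧
      deriv f.F x ≤ f.be i * |x - z| ^ (f.s i - 1) := by
  obtain ⟨i, k, rfl⟩ := f.critOnly z hz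
  have hW : (fun x : ℝ => x - k) ⁻¹' f.W i ∈ 𝓝 (f.c i + k) :=
    ((f.W_open i).preimage (continuous_sub_right _)).mem_nhds (by simpa using f.c_mem_W i)
  refine ⟨i, eventually_of_mem hW fun x hx => ?_⟩
  rw [add_comm, ← sub_sub, ← f.deriv_sub_int x k, ← f.schwarzianDeriv_sub_int x k]
  by_cases hxc : x - k = f.c i
  · have hs : f.s i - 1 ≠ 0 := (sub_pos.2 (f.s_gt_one i)).ne'
    simp [hxc, f.isCrit, hs]
  · have hpow := f.powerLaw i _ hx hxc
    exact ⟨fun _ => f.negSchwarzian i _ hx hxc, hpow.1.le, hpow.2.le⟩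

lemma map_sub_map_nonneg {a b ξ : ℝ} (hξ : ξ ∈ Icc a b) : 0 ≤ f.F b - f.F a :=
  sub_nonneg.2 (f.mono.monotone (hξ.1.trans hξ.2))

lemma exists_nhds_deriv_mul_sub_le (z : ℝ) :
    ∃ U ∈ 𝓝 z, ∃ K, ∀ a b, a ≤ b → Icc a b ⊆ U → ∀ ξ ∈ Icc a b,
      deriv f.F ξ * (b - a) ≤ K * (f.F b - f.F a) := by
  rcases (f.deriv_nonneg z).eq_or_lt with hz | hz
  · obtain ⟨i, hi⟩ := f.eventually_near_critical_point hz.symm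
    exact ⟨_, hi, _, fun a b _ hab ξ hξ => deriv_mul_sub_le_of_power_law f.differentiable
      f.mono.monotone (f.al_pos i) ((f.al_pos i).trans (f.al_lt_be i)).le
      (sub_pos.2 (f.s_gt_one i)).le (fun t ht => (hab ht).2.1) (hab hξ).2.2 hξ⟩
  · obtain ⟨U, hU, K, hK, h⟩ :=
      exists_nhds_deriv_mul_sub_le_exp (f.smooth.of_le (by norm_num)) hz
    refine ⟨U ∩ Icc (z - 1) (z + 1),
      inter_mem hU (Icc_mem_nhds (by linarith) (by linarith)), Real.exp (K * 2),
      fun a b hle hab ξ hξ => (h a b (fun t ht => (hab ht).1) ξ hξ).trans ?_⟩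
    have := f.map_sub_map_nonneg hξ
    gcongr
    linarith [(hab (left_mem_Icc.2 hle)).2.1, (hab (right_mem_Icc.2 hle)).2.2]

theorem exists_deriv_mul_sub_le :
    ∃ K, ∀ a b, ∀ ξ ∈ Icc a b, deriv f.F ξ * (b - a) ≤ K * (f.F b - f.F a) := by
  obtain ⟨K, δ, hδ, hsmall⟩ := exists_forall_interval_of_forall_nhds
    (P := fun K a b => ∀ ξ ∈ Icc a b, deriv f.F ξ * (b - a) ≤ K * (f.F b - f.F a))
    (fun K K' a b hK h ξ hξ =>
      (h ξ hξ).trans (mul_le_mul_of_nonneg_right hK (f.map_sub_map_nonneg hξ)))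
    (fun K a b m h ξ hξ => by
      simpa only [f.deriv_sub_int, f.map_sub_int, sub_sub_sub_cancel_right] using
        h (ξ - m) ⟨sub_le_sub_right hξ.1 _, sub_le_sub_right hξ.2 _⟩)
    f.exists_nhds_deriv_mul_sub_le
  obtain ⟨K', hlarge⟩ :=
    exists_deriv_mul_sub_le_of_le_sub (f.smooth.of_le (by norm_num)) f.mono f.deg1 hδ
  refine ⟨max K K', fun a b ξ hξ => ?_⟩
  have hnonneg := f.map_sub_map_nonneg hξ
  rcases lt_or_ge (b - a) δ with hlt | hge
  · exact (hsmall a b (hξ.1.trans hξ.2) hlt ξ hξ).trans (by gcongr; exact le_max_left _ _)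
  · exact (hlarge a b hge ξ).trans (by gcongr; exact le_max_right _ _)

lemma exists_nhds_schwarzianDeriv_le (z : ℝ) :
    ∃ U ∈ 𝓝 z, ∃ B, ∀ t ∈ U, deriv f.F t ≠ 0 → schwarzianDeriv f.F t ≤ B := by
  by_cases hz : deriv f.F z = 0
  · obtain ⟨i, hi⟩ := f.eventually_near_critical_point hz
    exact ⟨_, hi, 0, fun t ht hne => (ht.1 hne).le⟩
  · have h₁ := (contDiff_deriv_of_contDiff_three f.smooth).continuous.continuousAt (x := z)
    have h₂ := (contDiff_deriv_deriv_of_contDiff_three f.smooth).continuous.continuousAt (x := z)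
    have h₃ := ((contDiff_deriv_deriv_of_contDiff_three f.smooth).continuous_deriv
      le_rfl).continuousAt (x := z)
    have hcont := (h₃.div h₁ hz).sub (((h₂.div h₁ hz).pow 2).const_mul (3 / 2))
    obtain ⟨B, hB⟩ := hcont.isBoundedUnder_le
    refine ⟨_, hB, B, fun t ht hne => ?_⟩
    rw [schwarzianDeriv_eq (hasDerivAt_deriv f.smooth t).differentiableAt
      (hasDerivAt_deriv_deriv f.smooth t).differentiableAt hne]
    exact ht

theorem exists_schwarzianDeriv_le :
    ∃ B > 0, ∀ x, deriv f.F x ≠ 0 → schwarzianDeriv f.F x ≤ B := by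
  obtain ⟨B, δ, hδ, h⟩ := exists_forall_interval_of_forall_nhds
    (P := fun B a _ => deriv f.F a ≠ 0 → schwarzianDeriv f.F a ≤ B)
    (fun _ _ _ _ hB h hne => (h hne).trans hB)
    (fun _ _ _ _ h => by
      simpa only [f.deriv_sub_int, f.schwarzianDeriv_sub_int] using h)
    fun z => by
      obtain ⟨U, hU, B, hB⟩ := f.exists_nhds_schwarzianDeriv_le z
      exact ⟨U, hU, B, fun a b hle hab => hB a (hab (left_mem_Icc.2 hle))⟩
  exact ⟨max B 1, by positivity, fun x hne =>
    (h x x le_rfl (by simpa using hδ) hne).trans (le_max_left _ _)⟩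

lemma exists_nhds_crossRatio_map_le_exp (z : ℝ) :
    ∃ U ∈ 𝓝 z, ∃ K, ∀ a d, a ≤ d → Icc a d ⊆ U → ∀ b c, a < b → b < c → c < d →
      (∀ t ∈ Icc a d, deriv f.F t ≠ 0) →
      crossRatio (f.F a) (f.F b) (f.F c) (f.F d) ≤
        Real.exp (K * (d - a)) * crossRatio a b c d := by
  rcases (f.deriv_nonneg z).eq_or_lt with hz | hz
  · obtain ⟨i, hi⟩ := f.eventually_near_critical_point hz.symm
    refine ⟨_, hi, 0, fun a d _ had b c hab hbc hcd hne => ?_⟩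
    rw [zero_mul, Real.exp_zero, one_mul]
    refine crossRatio_map_le_of_deriv_mul_deriv_le f.differentiable f.mono hab hbc hcd
      fun x hx y hy => ?_
    have hsub : Icc x y ⊆ Icc a d := Icc_subset_Icc hx.1 hy.2
    exact deriv_mul_deriv_mul_sq_le f.smooth (by linarith [hx.2, hy.1])
      (fun t ht => (f.deriv_nonneg t).lt_of_ne' (hne t (hsub ht)))
      (fun t ht => ((had (hsub ht)).1 (hne t (hsub ht))).le)
  · obtain ⟨U, hU, K, hK, h⟩ :=
      exists_nhds_deriv_mul_sub_le_exp (f.smooth.of_le (by norm_num)) hz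
    refine ⟨U, hU, 2 * K, fun a d _ had b c hab hbc hcd _ => ?_⟩
    have hbound (x y : ℝ) (hx : a ≤ x) (hy : y ≤ d) (ξ) (hξ : ξ ∈ Icc x y) :
        deriv f.F ξ * (y - x) ≤ Real.exp (K * (d - a)) * (f.F y - f.F x) := by
      refine (h x y ((Icc_subset_Icc hx hy).trans had) ξ hξ).trans ?_
      have := f.map_sub_map_nonneg hξ
      gcongr
    convert crossRatio_map_le_mul_crossRatio f.differentiable f.mono hab hbc hcd
      (hbound a c le_rfl hcd.le) (hbound b d hab.le le_rfl) using 2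
    rw [← Real.exp_nat_mul, Nat.cast_ofNat, mul_assoc]

theorem exists_crossRatio_map_le_exp :
    ∃ K, ∃ δ > 0, ∀ a d, a ≤ d → d - a < δ → ∀ b c, a < b → b < c → c < d →
      (∀ t ∈ Icc a d, deriv f.F t ≠ 0) →
      crossRatio (f.F a) (f.F b) (f.F c) (f.F d) ≤
        Real.exp (K * (d - a)) * crossRatio a b c d := by
  refine exists_forall_interval_of_forall_nhds
    (P := fun K a d => ∀ b c, a < b → b < c → c < d → (∀ t ∈ Icc a d, deriv f.F t ≠ 0) →
      crossRatio (f.F a) (f.F b) (f.F c) (f.F d) ≤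
        Real.exp (K * (d - a)) * crossRatio a b c d)
    (fun K K' a d hK h b c hab hbc hcd hne => (h b c hab hbc hcd hne).trans ?_)
    (fun K a d m h b c hab hbc hcd hne => ?_) f.exists_nhds_crossRatio_map_le_exp
  · have := (crossRatio_pos hab hbc hcd).le
    gcongr
    linarith
  · have hne' (t) (ht : t ∈ Icc (a - m) (d - m)) : deriv f.F t ≠ 0 := by
      simpa only [← f.deriv_sub_int (t + m) m, add_sub_cancel_right] using
        hne (t + m) ⟨by linarith [ht.1], by linarith [ht.2]⟩
    simpa only [f.map_sub_int, crossRatio_sub_const, sub_sub_sub_cancel_right] using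
      h (b - m) (c - m) (sub_lt_sub_right hab _) (sub_lt_sub_right hbc _)
        (sub_lt_sub_right hcd _) hne'

/-- Counts the critical points up to `x`, once as soon as they are reached and once more when they
are passed, up to an additive constant: it increases by at least one over every closed interval
that contains a critical point. -/
def critCount (x : ℝ) : ℝ := ∑ i, ((⌈x - f.c i⌉ + ⌊x - f.c i⌋ : ℤ) : ℝ)

lemma critCount_mono : Monotone f.critCount := fun x y hxy => by
  unfold critCount
  gcongr

lemma critCount_add_one (x : ℝ) : f.critCount (x + 1) = f.critCount x + 2 * f.N := by
  simp only [critCount, add_sub_right_comm x 1, Int.ceil_add_one, Int.floor_add_one]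
  push_cast
  simp only [Finset.sum_add_distrib, Finset.sum_const, Finset.card_univ, Fintype.card_fin]
  ring

lemma critCount_add_one_le {a d t : ℝ} (had : a < d) (ht : t ∈ Icc a d)
    (ht' : deriv f.F t = 0) : f.critCount a + 1 ≤ f.critCount d := by
  obtain ⟨i, k, rfl⟩ := f.critOnly t ht'
  have hjump : ⌈a - f.c i⌉ + ⌊a - f.c i⌋ < ⌈d - f.c i⌉ + ⌊d - f.c i⌋ := by
    have hceil : ⌈a - f.c i⌉ ≤ k := Int.ceil_le.2 (by linarith [ht.1])
    have hfloor : k ≤ ⌊d - f.c i⌋ := Int.le_floor.2 (by linarith [ht.2])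
    have hstep : ⌊a - f.c i⌋ < ⌈d - f.c i⌉ :=
      Int.lt_ceil.2 ((Int.floor_le _).trans_lt (by linarith))
    lia
  have hlt : ∑ i, (⌈a - f.c i⌉ + ⌊a - f.c i⌋) < ∑ i, (⌈d - f.c i⌉ + ⌊d - f.c i⌋) :=
    Finset.sum_lt_sum (fun _ _ => by gcongr) ⟨i, Finset.mem_univ i, hjump⟩
  unfold critCount
  exact_mod_cast hlt

lemma exists_crossRatio_map_le_exp_const :
    ∃ C ≥ 0, ∀ a b c d, a < b → b < c → c < d →
      crossRatio (f.F a) (f.F b) (f.F c) (f.F d) ≤ Real.exp C * crossRatio a b c d := by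
  obtain ⟨K, hK⟩ := f.exists_deriv_mul_sub_le
  refine ⟨K ^ 2, sq_nonneg K, fun a b c d hab hbc hcd => ?_⟩
  have hpos := (crossRatio_pos hab hbc hcd).le
  refine (crossRatio_map_le_mul_crossRatio f.differentiable f.mono hab hbc hcd (hK a c)
    (hK b d)).trans ?_
  gcongr
  linarith [Real.add_one_le_exp (K ^ 2)]

theorem exists_hasCrossRatioControl : ∃ Φ κ, HasCrossRatioControl f.F Φ κ := by
  obtain ⟨C, hC, hlarge⟩ := f.exists_crossRatio_map_le_exp_const
  obtain ⟨A, δ, hδ, hsmall⟩ := f.exists_crossRatio_map_le_exp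
  set B := max A (C / δ)
  have hB : 0 ≤ B := le_max_of_le_right (by positivity)
  refine ⟨fun x => B * x + C * f.critCount x, B + C * (2 * f.N), fun x y hxy => ?_,
    fun x => ?_, fun a b c d hab hbc hcd => ?_⟩
  · have := f.critCount_mono hxy
    gcongr
  · rw [f.critCount_add_one]
    ring
  · have had : a < d := hab.trans (hbc.trans hcd)
    have hpos := (crossRatio_pos hab hbc hcd).le
    have hgrow : 0 ≤ C * (f.critCount d - f.critCount a) :=
      mul_nonneg hC (sub_nonneg.2 (f.critCount_mono had.le))
    suffices h : ∃ E ≤ B * (d - a) + C * (f.critCount d - f.critCount a),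
        crossRatio (f.F a) (f.F b) (f.F c) (f.F d) ≤ Real.exp E * crossRatio a b c d by
      obtain ⟨E, hE, h⟩ := h
      refine h.trans ?_
      gcongr
      linarith
    by_cases! hcrit : ∃ t ∈ Icc a d, deriv f.F t = 0
    · obtain ⟨t, ht, ht'⟩ := hcrit
      refine ⟨C, ?_, hlarge a b c d hab hbc hcd⟩
      nlinarith [f.critCount_add_one_le had ht ht']
    rcases lt_or_ge (d - a) δ with hlt | hge
    · refine ⟨A * (d - a), ?_, hsmall a d had.le hlt b c hab hbc hcd hcrit⟩
      linarith [mul_le_mul_of_nonneg_right (le_max_left A (C / δ)) (sub_pos.2 had).le]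
    · refine ⟨C, ?_, hlarge a b c d hab hbc hcd⟩
      have : C ≤ B * (d - a) := calc
        C = C / δ * δ := (div_mul_cancel₀ C hδ.ne').symm
        _ ≤ B * (d - a) := by
          gcongr
          exact le_max_right _ _
      linarith

variable {f}

lemma exists_eventually_schwarzianDeriv_mul_sq_le {i : Fin f.N}
    (hcanonical : ∀ᶠ x in 𝓝 (f.c i),
      f.F x = f.F (f.c i) + (x - f.c i) * |x - f.c i| ^ (f.s i - 1)) :
    ∃ κ > 0, ∀ᶠ x in 𝓝[≠] f.c i, schwarzianDeriv f.F x * (x - f.c i) ^ 2 ≤ -κ := by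
  have hs := sub_pos.2 (f.s_gt_one i)
  exact ⟨_, by positivity, (eventually_schwarzianDeriv_mul_sq_eq (by positivity)
    hcanonical).mono fun _ h => h.le⟩

theorem exists_forall_schwarzianDeriv_iterate_neg {ρ : ℝ} (hirr : Irrational ρ)
    (hmem : ρ ∈ Ioo (0 : ℝ) 1) (hrot : HasRotationNumber f.F ρ) {i₀ : Fin f.N}
    (hlocal : ∃ κ > 0, ∀ᶠ x in 𝓝[≠] f.c i₀,
      schwarzianDeriv f.F x * (x - f.c i₀) ^ 2 ≤ -κ) :
    ∃ n₀, ∀ n ≥ n₀, ∀ x ∈ atomSet f.F ρ (f.c i₀) n 0,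
      deriv f.F^[qDen ρ (n + 1)] x ≠ 0 → schwarzianDeriv f.F^[qDen ρ (n + 1)] x < 0 := by
  have hlift := f.isIrrationalLift hirr hrot
  obtain ⟨κ, hκ, hlocal⟩ := hlocal
  obtain ⟨r, hr, hlocal⟩ := Metric.eventually_nhds_iff.1 (eventually_nhdsWithin_iff.1 hlocal)
  obtain ⟨B, hB, hSle⟩ := f.exists_schwarzianDeriv_le
  obtain ⟨Φ, μ, hΦ⟩ := f.exists_hasCrossRatioControl
  obtain ⟨η, hη, hη'⟩ := exists_between (lt_min hr (div_pos hκ hB))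
  obtain ⟨hηr, hηκ⟩ := lt_min_iff.1 hη'
  obtain ⟨n₀, hn₀⟩ := exists_forall_gap_lt_and_sum_sq_le hlift hmem (gapBoundsConstant_pos μ)
    (hasGapBounds_convergents hlift hmem f.differentiable hΦ) hη
  refine ⟨n₀, fun n hn x hx hx' => ?_⟩
  have hq := one_le_qDen hirr hmem (n + 1)
  rw [atomSet_zero_eq] at hx
  obtain ⟨hgap, hsum⟩ := hn₀ n hn _ x hx
  refine schwarzianDeriv_iterate_neg f.smooth hq hx' hB.le hSle ?_ hsum
    ((lt_div_iff₀' hB).1 hηκ)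
  have hxc := abs_sub_left_of_mem_uIcc hx
  have hne : x ≠ f.c i₀ := by
    rintro rfl
    exact deriv_iterate_ne_zero_of_le f.differentiable hq hx' (f.isCrit i₀)
  have hpoint := hlocal (hxc.trans_lt (hgap.trans hηr)) hne
  have hneg : schwarzianDeriv f.F x ≤ 0 :=
    nonpos_of_mul_nonpos_left (hpoint.trans (neg_nonpos.2 hκ.le))
      (sq_pos_of_ne_zero (sub_ne_zero.2 hne))
  exact (mul_le_mul_of_nonpos_left (sq_le_sq.2 hxc) hneg).trans hpoint

end MCM

/-! ### Bridges -/

lemma IsBridgePair.lt_cfDigit {f : MCM} {ρ : ℝ} {i₀ : Fin f.N} {n i j k : ℕ}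
    (h : IsBridgePair f ρ i₀ n i j) (hk : k < j) : k < cfDigit ρ (n + 1) := by
  obtain ⟨-, -, -, hj | rfl⟩ := h
  exacts [hk.trans hj.1, hk]

lemma IsBridgePair.deriv_iterate_ne_zero {f : MCM} {ρ : ℝ} {i₀ : Fin f.N} {n i j k : ℕ}
    (h : IsBridgePair f ρ i₀ n i j) (hik : i < k) (hkj : k < j) {x : ℝ}
    (hx : x ∈ atomSet f.F ρ (f.c i₀) (n + 1) (qDen ρ n + k * qDen ρ (n + 1))) :
    deriv f.F^[qDen ρ (n + 1)] x ≠ 0 :=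
  fun hx' => h.2.2.1 k hik hkj ⟨h.lt_cfDigit hkj, x, hx, hx'⟩

theorem negative_schwarzian_on_reduced_bridges_general (f : MCM) {ρ : ℝ} (hirr : Irrational ρ)
    (hmem : ρ ∈ Ioo (0 : ℝ) 1) (hrot : HasRotationNumber f.F ρ) (i₀ : Fin f.N)
    (hlocal : ∃ κ > 0, ∀ᶠ x in 𝓝[≠] f.c i₀,
      schwarzianDeriv f.F x * (x - f.c i₀) ^ 2 ≤ -κ) :
    ∃ n₀, ∀ n ≥ n₀, ∀ i j, IsBridgePair f ρ i₀ n i j → ∀ k, i < k → k < j →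
      ∀ x ∈ atomSet f.F ρ (f.c i₀) (n + 1) (qDen ρ n + k * qDen ρ (n + 1)),
        schwarzianDeriv f.F^[qDen ρ (n + 1)] x < 0 := by
  have hlift := f.isIrrationalLift hirr hrot
  obtain ⟨n₀, hn₀⟩ := MCM.exists_forall_schwarzianDeriv_iterate_neg hirr hmem hrot hlocal
  refine ⟨n₀, fun n hn i j hij k hik hkj x hx => ?_⟩
  have hx' := hij.deriv_iterate_ne_zero hik hkj hx
  set p : ℤ := pNum ρ n + k * pNum ρ (n + 1)
  have htrans (t : ℝ) := hlift.iterate_add_int (qDen ρ (n + 1)) t p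
  rw [← sub_add_cancel x (p : ℝ), deriv_add_of_map_add htrans] at hx'
  rw [← sub_add_cancel x (p : ℝ), schwarzianDeriv_add_of_map_add htrans]
  exact hn₀ n hn _ (sub_mem_atomSet_zero hlift hmem (hij.lt_cfDigit hkj) hx) hx'

/-- **negative Schwarzian on reduced bridges.** Suppose the multicritical
circle map `f` is canonical: near each critical point `c_k` one has
`f(x) = f(c_k) + (x - c_k)|x - c_k|^{s_k - 1}`. Then there is `n₀ = n₀(f)` such that for
all `n ≥ n₀` and every non-empty reduced bridge `G_i* = ⋃_{k=k_i+2}^{k_{i+1}-2} Δ_k`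
inside `I_n(c₀)`, the Schwarzian derivative of `f^{q_{n+1}}` is negative at every point
of `G_i*`. -/
theorem negative_schwarzian_on_reduced_bridges
    (f : MCM) (ρ : ℝ) (hirr : Irrational ρ) (hmem : ρ ∈ Set.Ioo (0 : ℝ) 1)
    (hrot : HasRotationNumber f.F ρ) (i₀ : Fin f.N)
    (hcanonical : ∀ i : Fin f.N, ∃ U ∈ nhds (f.c i), ∀ x ∈ U,
      f.F x = f.F (f.c i) + (x - f.c i) * |x - f.c i| ^ (f.s i - 1)) :
    ∃ n₀ : ℕ, ∀ n : ℕ, n₀ ≤ n → ∀ i j : ℕ, IsBridgePair f ρ i₀ n i j →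
      ∀ k : ℕ, i + 2 ≤ k → k + 2 ≤ j →
        ∀ x ∈ atomSet f.F ρ (f.c i₀) (n + 1) (qDen ρ n + k * qDen ρ (n + 1)),
          schwarzianDeriv (f.F^[qDen ρ (n + 1)]) x < 0 := by
  obtain ⟨n₀, hn₀⟩ := negative_schwarzian_on_reduced_bridges_general f hirr hmem hrot i₀
    (MCM.exists_eventually_schwarzianDeriv_mul_sq_le
      (eventually_iff_exists_mem.2 (hcanonical i₀)))
  exact ⟨n₀, fun n hn i j hij k hik hkj => hn₀ n hn i j hij k (by lia) (by lia)⟩
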